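/- There exist universal constants C, C', c > 0 and ρ ∈ (0,1) such that the following holds. Let x ∈ ℝ^n, let a₁, …, a_m be independent standard Gaussian vectors a_ℓ ∼ N(0, I_n), and let y_ℓ = |a_ℓ^T x|². Suppose m ≥ C n log n. Consider the Wirtinger flow iteration z_{k+1} = z_k − (α_k/m) Σ_{ℓ=1}^m (|a_ℓ^T z_k|² − y_ℓ)(a_ℓ^T z_k) a_ℓ with a suitable constant stepsize α_k = α/‖z₀‖₂², initialized by the spectral method: z₀ is a top eigenvector of (1/m) Σ_ℓ y_ℓ a_ℓ a_ℓ^T rescaled so that ‖z₀‖₂² = (1/m) Σ_ℓ y_ℓ. Then with probability at least 1 − C' n^{−c}, the iterates converge linearly to x up to global sign: dist(z_k, x) ≤ ρ^k dist(z₀, x) for all k ≥ 0, where dist(z, x) = min(‖z − x‖₂, ‖z + x‖₂), and dist(z₀, x) ≤ (1/8)‖x‖₂. -/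

import Mathlib

noncomputable section

open scoped BigOperators ENNReal NNReal
open Matrix MeasureTheory ProbabilityTheory

/-- Euclidean (ℓ₂) norm of a real vector. -/
def l2norm {m : ℕ} (y : Fin m → ℝ) : ℝ :=
  Real.sqrt (∑ i, (y i) ^ 2)

/-- Distance up to global sign. -/
def signDist {n : ℕ} (z x : Fin n → ℝ) : ℝ :=
  min (l2norm (z - x)) (l2norm (z + x))

/-- The law of `m` independent standard Gaussian vectors `a_ℓ ∼ N(0, I_n)`. -/
def gaussianVectors (n m : ℕ) : Measure (Fin m → Fin n → ℝ) :=
  Measure.pi fun _ : Fin m => Measure.pi fun _ : Fin n => gaussianReal 0 1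

namespace WF

section Deterministic

variable {V : Type*} [NormedAddCommGroup V] [InnerProductSpace ℝ V] {m : ℕ}

local notation "⟪" x "," y "⟫" => inner ℝ x y

/-- The weighted covariance operator. -/
def Gop (a : Fin m → V) (x u : V) : V :=
  (m : ℝ)⁻¹ • ∑ l, (⟪a l, x⟫ ^ 2 * ⟪a l, u⟫) • a l

/-- The gradient of the loss. -/
def gradf (a : Fin m → V) (x z : V) : V :=
  (m : ℝ)⁻¹ • ∑ l, ((⟪a l, z⟫ ^ 2 - ⟪a l, x⟫ ^ 2) * ⟪a l, z⟫) • a l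

/-- Average of the measurements. -/
def sig2 (a : Fin m → V) (x : V) : ℝ := (m : ℝ)⁻¹ * ∑ l, ⟪a l, x⟫ ^ 2

/-- Normalised power iteration. -/
def pw (a : Fin m → V) (x : V) : ℕ → V
  | 0 => x
  | k + 1 => (⟪x, Gop a x (pw a x k)⟫)⁻¹ • Gop a x (pw a x k)

/-- Explicit trajectory. -/
def tr (a : Fin m → V) (x : V) (α : ℝ) : ℕ → V
  | 0 => (√(sig2 a x) / ‖pw a x m‖) • pw a x m
  | k + 1 => tr a x α k - (α / sig2 a x) • gradf a x (tr a x α k)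

/-- The set of quadratic-form bounds. -/
def QB (a : Fin m → V) (x : V) (ε : ℝ) : Prop :=
  ∀ u : V, |(m : ℝ)⁻¹ * ∑ l, ⟪a l, x⟫ ^ 2 * ⟪a l, u⟫ ^ 2 - (‖u‖ ^ 2 + 2 * ⟪x, u⟫ ^ 2)| ≤ ε * ‖u‖ ^ 2

def EB (a : Fin m → V) (h : V) (e : ℝ) : Prop :=
  ∀ u : V, (m : ℝ)⁻¹ * ∑ l, ⟪a l, h⟫ ^ 2 * ⟪a l, u⟫ ^ 2 ≤ e * ‖u‖ ^ 2

lemma wcs {ι : Type*} (s : Finset ι) (c w p q : ι → ℝ) (A P Q : ℝ) (hA : 0 ≤ A) (hP : 0 ≤ P)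
    (hQ : 0 ≤ Q) (hw : ∀ i ∈ s, |c i| ≤ w i) (hp : ∑ i ∈ s, w i * p i ^ 2 ≤ A * P ^ 2)
    (hq : ∑ i ∈ s, w i * q i ^ 2 ≤ A * Q ^ 2) :
    |∑ i ∈ s, c i * p i * q i| ≤ A * P * Q := by
  have h0 : ∀ i ∈ s, 0 ≤ w i := fun i hi => (abs_nonneg _).trans (hw i hi)
  have h1 : |∑ i ∈ s, c i * p i * q i| ≤ ∑ i ∈ s, (√(w i) * |p i|) * (√(w i) * |q i|) := by
    refine (Finset.abs_sum_le_sum_abs _ _).trans (Finset.sum_le_sum fun i hi => ?_)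
    rw [abs_mul, abs_mul]
    have : √(w i) * |p i| * (√(w i) * |q i|) = (√(w i) * √(w i)) * |p i| * |q i| := by ring
    rw [this, Real.mul_self_sqrt (h0 i hi)]
    have := hw i hi
    gcongr
  have h2 := Finset.sum_mul_sq_le_sq_mul_sq s (fun i => √(w i) * |p i|) (fun i => √(w i) * |q i|)
  have e1 : ∀ f : ι → ℝ, ∑ i ∈ s, (√(w i) * |f i|) ^ 2 = ∑ i ∈ s, w i * f i ^ 2 := by
    intro f
    refine Finset.sum_congr rfl fun i hi => ?_
    rw [mul_pow, Real.sq_sqrt (h0 i hi), sq_abs]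
  rw [e1, e1] at h2
  refine h1.trans (abs_le_of_sq_le_sq' ?_ (by positivity)).2
  refine h2.trans ?_
  calc _ ≤ (A * P ^ 2) * (A * Q ^ 2) := by
        apply mul_le_mul hp hq _ (by positivity)
        exact Finset.sum_nonneg fun i hi => mul_nonneg (h0 i hi) (sq_nonneg _)
    _ = _ := by ring

lemma inner_Gop (a : Fin m → V) (x u w : V) :
    ⟪Gop a x u, w⟫ = (m : ℝ)⁻¹ * ∑ l, ⟪a l, x⟫ ^ 2 * ⟪a l, u⟫ * ⟪a l, w⟫ := by
  simp only [Gop, inner_smul_left, sum_inner, conj_trivial]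

lemma Gop_add (a : Fin m → V) (x u w : V) : Gop a x (u + w) = Gop a x u + Gop a x w := by
  simp only [Gop, inner_add_right, mul_add, add_smul, Finset.sum_add_distrib, smul_add]

lemma Gop_smul (a : Fin m → V) (x u : V) (c : ℝ) : Gop a x (c • u) = c • Gop a x u := by
  simp only [Gop, inner_smul_right, Finset.smul_sum, smul_smul]
  refine Finset.sum_congr rfl fun l _ => ?_
  congr 1; ring

lemma Gop_sub (a : Fin m → V) (x u w : V) : Gop a x (u - w) = Gop a x u - Gop a x w := by
  rw [sub_eq_add_neg, Gop_add, ← neg_one_smul ℝ w, Gop_smul, neg_one_smul, sub_eq_add_neg]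

lemma inner_Gop_comm (a : Fin m → V) (x u w : V) : ⟪Gop a x u, w⟫ = ⟪u, Gop a x w⟫ := by
  rw [real_inner_comm (Gop a x w) u, inner_Gop, inner_Gop]
  congr 1
  exact Finset.sum_congr rfl fun l _ => by ring

lemma QB.inner {a : Fin m → V} {x : V} {ε : ℝ} (h : QB a x ε) (u w : V) :
    |⟪Gop a x u, w⟫ - (⟪u, w⟫ + 2 * ⟪x, u⟫ * ⟪x, w⟫)| ≤ ε / 2 * (‖u‖ ^ 2 + ‖w‖ ^ 2) := by
  have h1 := h (u + w)
  have h2 := h (u - w)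
  have e1 : ∀ v, (m : ℝ)⁻¹ * ∑ l, ⟪a l, x⟫ ^ 2 * ⟪a l, v⟫ ^ 2 = ⟪Gop a x v, v⟫ := by
    intro v; rw [inner_Gop]; congr 1; exact Finset.sum_congr rfl fun l _ => by ring
  rw [e1] at h1 h2
  have p := @parallelogram_law_with_norm ℝ V _ _ _ u w
  rw [Gop_add, norm_add_sq_real] at h1
  rw [Gop_sub, norm_sub_sq_real] at h2
  simp only [inner_add_left, inner_add_right, inner_sub_left, inner_sub_right] at h1 h2
  have hc2 : ⟪Gop a x w, u⟫ = ⟪Gop a x u, w⟫ := by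
    rw [inner_Gop_comm, real_inner_comm]
  rw [hc2] at h1 h2
  rw [abs_le] at *
  constructor <;> nlinarith

lemma QB.norm_le {a : Fin m → V} {x : V} {ε : ℝ} (hε : 0 ≤ ε) (h : QB a x ε) (u : V) :
    ‖Gop a x u - (u + (2 * ⟪x, u⟫) • x)‖ ≤ ε * ‖u‖ := by
  set d := Gop a x u - (u + (2 * ⟪x, u⟫) • x) with hd
  by_cases hd0 : ‖d‖ = 0
  · rw [hd0]; positivity
  by_cases hu0 : u = 0
  · subst hu0
    have : Gop a x 0 = 0 := by have := Gop_smul a x (0:V) 0; simpa using this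
    simp [hd, this]
  have hu : 0 < ‖u‖ := norm_pos_iff.2 hu0
  have hdp : 0 < ‖d‖ := lt_of_le_of_ne (norm_nonneg _) (Ne.symm hd0)
  have k := h.inner u ((‖u‖ / ‖d‖) • d)
  have e : ⟪Gop a x u, (‖u‖ / ‖d‖) • d⟫ - (⟪u, (‖u‖ / ‖d‖) • d⟫ + 2 * ⟪x, u⟫ * ⟪x, (‖u‖ / ‖d‖) • d⟫)
      = ‖u‖ * ‖d‖ := by
    simp only [inner_smul_right]
    have : ⟪Gop a x u, d⟫ - (⟪u, d⟫ + 2 * ⟪x, u⟫ * ⟪x, d⟫) = ‖d‖ ^ 2 := by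
      rw [← real_inner_self_eq_norm_sq]
      conv_rhs => rw [hd]
      rw [← hd, inner_sub_left, inner_add_left, inner_smul_left]; simp
    calc _ = (‖u‖ / ‖d‖) * (⟪Gop a x u, d⟫ - (⟪u, d⟫ + 2 * ⟪x, u⟫ * ⟪x, d⟫)) := by ring
      _ = _ := by rw [this]; field_simp
  rw [e] at k
  have e2 : ‖(‖u‖ / ‖d‖) • d‖ = ‖u‖ := by
    rw [norm_smul, Real.norm_of_nonneg (by positivity)]; field_simp
  rw [e2] at k
  have := (le_abs_self _).trans k
  have : ‖u‖ * ‖d‖ ≤ ‖u‖ * (ε * ‖u‖) := by nlinarith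
  exact le_of_mul_le_mul_left this hu

lemma grad_diff_inner (a : Fin m → V) (x h h' u : V) :
    ⟪gradf a x (x + h) - gradf a x (x + h'), u⟫ = (m : ℝ)⁻¹ * ∑ l,
      (2 * ⟪a l, x⟫ ^ 2 + 3 * ⟪a l, x⟫ * (⟪a l, h⟫ + ⟪a l, h'⟫) + (⟪a l, h⟫ ^ 2 +
        ⟪a l, h⟫ * ⟪a l, h'⟫ + ⟪a l, h'⟫ ^ 2)) * ⟪a l, h - h'⟫ * ⟪a l, u⟫ := by
  simp only [gradf, inner_sub_left, inner_smul_left, sum_inner, conj_trivial, inner_add_right,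
    inner_sub_right]
  rw [← mul_sub, ← Finset.sum_sub_distrib]
  congr 1
  exact Finset.sum_congr rfl fun l _ => by ring

lemma gradf_self (a : Fin m → V) (x : V) : gradf a x x = 0 := by simp [gradf]

lemma grad_bounds (a : Fin m → V) (x h h' : V) (ε : ℝ) (hε : ε ≤ 1 / 100) (hx : ‖x‖ = 1)
    (hG : QB a x ε) (h1 : EB a h (1 / 1000)) (h2 : EB a h' (1 / 1000)) :
    ‖h - h'‖ ^ 2 ≤ ⟪gradf a x (x + h) - gradf a x (x + h'), h - h'⟫ ∧
    ‖gradf a x (x + h) - gradf a x (x + h')‖ ≤ 7 * ‖h - h'‖ := by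
  set D := gradf a x (x + h) - gradf a x (x + h') with hD
  set d := h - h' with hd
  have hm : (0:ℝ) ≤ (m : ℝ)⁻¹ := by positivity
  constructor
  · rw [hD, grad_diff_inner, ← hd]
    have b1 := hG d
    have b2 := h1 d
    have b3 := h2 d
    have : (m : ℝ)⁻¹ * ∑ l, (19 / 10 * (⟪a l, x⟫ ^ 2 * ⟪a l, d⟫ ^ 2)
        - 47 * (⟪a l, h⟫ ^ 2 * ⟪a l, d⟫ ^ 2) - 47 * (⟪a l, h'⟫ ^ 2 * ⟪a l, d⟫ ^ 2)) ≤
      (m : ℝ)⁻¹ * ∑ l,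
      (2 * ⟪a l, x⟫ ^ 2 + 3 * ⟪a l, x⟫ * (⟪a l, h⟫ + ⟪a l, h'⟫) + (⟪a l, h⟫ ^ 2 +
        ⟪a l, h⟫ * ⟪a l, h'⟫ + ⟪a l, h'⟫ ^ 2)) * ⟪a l, d⟫ * ⟪a l, d⟫ := by
      refine mul_le_mul_of_nonneg_left (Finset.sum_le_sum fun l _ => ?_) hm
      generalize ⟪a l, x⟫ = g
      generalize ⟪a l, h⟫ = r
      generalize ⟪a l, h'⟫ = s
      generalize ⟪a l, d⟫ = p
      have : 0 ≤ (2 * g ^ 2 + 3 * g * (r + s) + (r ^ 2 + r * s + s ^ 2)) -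
          (19 / 10 * g ^ 2 - 47 * r ^ 2 - 47 * s ^ 2) := by
        nlinarith [sq_nonneg (g + 15 * (r + s)), sq_nonneg (r - s), sq_nonneg (r + s)]
      nlinarith [mul_nonneg this (sq_nonneg p)]
    refine le_trans ?_ this
    simp only [Finset.sum_sub_distrib, ← Finset.mul_sum]
    rw [abs_le] at b1
    nlinarith [sq_nonneg ⟪x, d⟫, sq_nonneg ‖d‖]
  · have key : ∀ u, |⟪D, u⟫| ≤ 7 * ‖d‖ * ‖u‖ := by
      intro u
      rw [hD, grad_diff_inner, ← hd, abs_mul, abs_of_nonneg hm]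
      have B : ∀ v, ∑ l, ((m : ℝ)⁻¹ * (21 / 10 * ⟪a l, x⟫ ^ 2 + 47 * ⟪a l, h⟫ ^ 2 + 47 * ⟪a l, h'⟫ ^ 2))
          * ⟪a l, v⟫ ^ 2 ≤ 7 * ‖v‖ ^ 2 := by
        intro v
        have b1 := hG v
        have b2 := h1 v
        have b3 := h2 v
        have e : ∑ l, ((m : ℝ)⁻¹ * (21 / 10 * ⟪a l, x⟫ ^ 2 + 47 * ⟪a l, h⟫ ^ 2 + 47 * ⟪a l, h'⟫ ^ 2))
          * ⟪a l, v⟫ ^ 2 = 21 / 10 * ((m : ℝ)⁻¹ * ∑ l, ⟪a l, x⟫ ^ 2 * ⟪a l, v⟫ ^ 2) +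
            47 * ((m : ℝ)⁻¹ * ∑ l, ⟪a l, h⟫ ^ 2 * ⟪a l, v⟫ ^ 2) +
            47 * ((m : ℝ)⁻¹ * ∑ l, ⟪a l, h'⟫ ^ 2 * ⟪a l, v⟫ ^ 2) := by
          simp only [Finset.mul_sum, ← Finset.sum_add_distrib]
          exact Finset.sum_congr rfl fun l _ => by ring
        rw [e]
        have hxv : ⟪x, v⟫ ^ 2 ≤ ‖v‖ ^ 2 := by
          have := abs_real_inner_le_norm x v
          rw [hx, one_mul] at this
          rw [← sq_abs]; gcongr
        rw [abs_le] at b1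
        nlinarith [sq_nonneg ‖v‖]
      have := wcs Finset.univ (fun l => (m : ℝ)⁻¹ * (2 * ⟪a l, x⟫ ^ 2 + 3 * ⟪a l, x⟫ * (⟪a l, h⟫ + ⟪a l, h'⟫) + (⟪a l, h⟫ ^ 2 +
        ⟪a l, h⟫ * ⟪a l, h'⟫ + ⟪a l, h'⟫ ^ 2)))
        (fun l => (m : ℝ)⁻¹ * (21 / 10 * ⟪a l, x⟫ ^ 2 + 47 * ⟪a l, h⟫ ^ 2 + 47 * ⟪a l, h'⟫ ^ 2))
        (fun l => ⟪a l, d⟫) (fun l => ⟪a l, u⟫) 7 ‖d‖ ‖u‖ (by norm_num) (norm_nonneg _) (norm_nonneg _)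
        (fun l _ => by
          rw [abs_mul, abs_of_nonneg hm]
          refine mul_le_mul_of_nonneg_left ?_ hm
          generalize ⟪a l, x⟫ = g
          generalize ⟪a l, h⟫ = r
          generalize ⟪a l, h'⟫ = s
          rw [abs_le]
          constructor <;>
          nlinarith [sq_nonneg (g + 15 * (r + s)), sq_nonneg (g - 15 * (r + s)), sq_nonneg (r - s),
            sq_nonneg (r + s), sq_nonneg g, sq_nonneg r, sq_nonneg s]) (B d) (B u)
      refine le_trans (le_of_eq ?_) this
      rw [← abs_of_nonneg hm, ← abs_mul, abs_of_nonneg hm, Finset.mul_sum]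
      congr 1
      exact Finset.sum_congr rfl fun l _ => by ring
    have k := key D
    rw [real_inner_self_eq_norm_sq, abs_of_nonneg (by positivity)] at k
    by_cases h0 : ‖D‖ = 0
    · rw [h0]; positivity
    · have : 0 < ‖D‖ := lt_of_le_of_ne (norm_nonneg _) (Ne.symm h0)
      nlinarith

lemma contract (a : Fin m → V) (x h h' : V) (ε η : ℝ) (hε : ε ≤ 1 / 100) (hx : ‖x‖ = 1)
    (hG : QB a x ε) (h1 : EB a h (1 / 1000)) (h2 : EB a h' (1 / 1000)) (hη : 0 ≤ η)
    (hη' : η ≤ 1 / 50) :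
    ‖(h - h') - η • (gradf a x (x + h) - gradf a x (x + h'))‖ ≤ (1 - η / 2) * ‖h - h'‖ := by
  obtain ⟨b1, b2⟩ := grad_bounds a x h h' ε hε hx hG h1 h2
  refine abs_le_of_sq_le_sq' ?_ (by nlinarith [norm_nonneg (h - h')]) |>.2
  rw [norm_sub_sq_real, inner_smul_right, norm_smul, Real.norm_of_nonneg hη, real_inner_comm]
  have b3 : ‖gradf a x (x + h) - gradf a x (x + h')‖ ^ 2 ≤ 49 * ‖h - h'‖ ^ 2 := by
    nlinarith [norm_nonneg (gradf a x (x + h) - gradf a x (x + h'))]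
  have b4 : η ^ 2 * ‖gradf a x (x + h) - gradf a x (x + h')‖ ^ 2 ≤ η ^ 2 * (49 * ‖h - h'‖ ^ 2) := by
    gcongr
  have b5 : η * ‖h - h'‖ ^ 2 ≤ η * ⟪gradf a x (x + h) - gradf a x (x + h'), h - h'⟫ := by gcongr
  have b6 : η ^ 2 * ‖h - h'‖ ^ 2 ≤ η * (1 / 50) * ‖h - h'‖ ^ 2 := by
    gcongr; nlinarith
  nlinarith

end Deterministic

end WF

namespace WF

section Deterministic2

variable {V : Type*} [NormedAddCommGroup V] [InnerProductSpace ℝ V] {m : ℕ}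

local notation "⟪" x "," y "⟫" => inner ℝ x y

def OpB (a : Fin m → V) (x : V) (e : ℝ) : Prop :=
  ∀ u : V, ‖Gop a x u - (u + (2 * ⟪x, u⟫) • x)‖ ≤ e * ‖u‖

lemma phi_lip (a : Fin m → V) (x w v : V) (hx : ‖x‖ = 1) (h : OpB a x (1 / 20))
    (hw : ⟪x, w⟫ = 1) (hv : ⟪x, v⟫ = 1) (hwn : ‖w‖ ≤ 2) (hvn : ‖v‖ ≤ 2) :
    ‖(⟪x, Gop a x w⟫)⁻¹ • Gop a x w - (⟪x, Gop a x v⟫)⁻¹ • Gop a x v‖ ≤ 1 / 2 * ‖w - v‖ := by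
  have beta : ∀ y, ⟪x, y⟫ = 1 → ‖y‖ ≤ 2 → 29 / 10 ≤ ⟪x, Gop a x y⟫ := by
    intro y hy hyn
    have h1 := h y
    have h2 := abs_real_inner_le_norm x (Gop a x y - (y + (2 * ⟪x, y⟫) • x))
    rw [hx, one_mul, inner_sub_right, inner_add_right, inner_smul_right, hy,
      real_inner_self_eq_norm_sq, hx] at h2
    rw [hy] at h1
    have := (abs_le.1 (h2.trans h1)).1
    norm_num at this
    linarith
  have bw := beta w hw hwn
  have bv := beta v hv hvn
  set β := ⟪x, Gop a x w⟫ with hβ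
  set γ := ⟪x, Gop a x v⟫ with hγ
  have hq0 : ⟪x, w - v⟫ = 0 := by rw [inner_sub_right, hw, hv, sub_self]
  have hq := h (w - v)
  rw [hq0] at hq
  simp only [mul_zero, zero_smul, add_zero] at hq
  have hGq : ‖Gop a x (w - v)‖ ≤ 21 / 20 * ‖w - v‖ := by
    have := norm_sub_norm_le (Gop a x (w - v)) (w - v)
    linarith
  have hbg : |γ - β| ≤ 1 / 20 * ‖w - v‖ := by
    have h2 := abs_real_inner_le_norm x (Gop a x (w - v) - (w - v))
    rw [hx, one_mul, inner_sub_right, hq0, Gop_sub, inner_sub_right, sub_zero, ← hβ, ← hγ, abs_sub_comm] at h2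
    rw [← Gop_sub] at h2
    exact h2.trans hq
  have hGv : ‖Gop a x v‖ ≤ 41 / 10 := by
    have h1 := h v
    rw [hv, mul_one] at h1
    have h2 : ‖v + (2 : ℝ) • x‖ ≤ 4 := by
      refine (norm_add_le _ _).trans ?_
      rw [norm_smul, hx]; norm_num; linarith
    have h3 := norm_sub_norm_le (Gop a x v) (v + (2 : ℝ) • x)
    have h4 := h3.trans h1
    linarith
  have e : β⁻¹ • Gop a x w - γ⁻¹ • Gop a x v = β⁻¹ • Gop a x (w - v) + (β⁻¹ - γ⁻¹) • Gop a x v := by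
    rw [Gop_sub, smul_sub, sub_smul]; abel
  rw [e]
  refine (norm_add_le _ _).trans ?_
  rw [norm_smul, norm_smul, Real.norm_of_nonneg (by positivity), Real.norm_eq_abs]
  have hβp : 0 < β := by linarith
  have hγp : 0 < γ := by linarith
  have i1 : β⁻¹ ≤ 10 / 29 := by rw [inv_le_comm₀ hβp (by norm_num)]; norm_num; linarith
  have i2 : γ⁻¹ ≤ 10 / 29 := by rw [inv_le_comm₀ hγp (by norm_num)]; norm_num; linarith
  have i3 : |β⁻¹ - γ⁻¹| ≤ 10 / 29 * (10 / 29) * (1 / 20 * ‖w - v‖) := by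
    have : β⁻¹ - γ⁻¹ = β⁻¹ * γ⁻¹ * (γ - β) := by field_simp
    rw [this, abs_mul, abs_of_nonneg (by positivity : 0 ≤ β⁻¹ * γ⁻¹)]
    gcongr
  calc _ ≤ 10 / 29 * (21 / 20 * ‖w - v‖) + (10 / 29 * (10 / 29) * (1 / 20 * ‖w - v‖)) * (41 / 10) := by
        gcongr
    _ ≤ _ := by linarith [norm_nonneg (w - v)]

lemma pw_props (a : Fin m → V) (x : V) (hx : ‖x‖ = 1) (h : OpB a x (1 / 20)) (k : ℕ) :
    ⟪x, pw a x k⟫ = 1 ∧ ‖pw a x k - x‖ ≤ 1 ∧ ‖pw a x k‖ ≤ 2 ∧ 29 / 10 ≤ ⟪x, Gop a x (pw a x k)⟫ ∧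
    ⟪x, Gop a x (pw a x k)⟫ ≤ 4 := by
  have hxx : ⟪x, x⟫ = 1 := by rw [real_inner_self_eq_norm_sq, hx]; norm_num
  have beta : ∀ y, ⟪x, y⟫ = 1 → ‖y‖ ≤ 2 → |⟪x, Gop a x y⟫ - 3| ≤ 1 / 20 * ‖y‖ := by
    intro y hy hyn
    have h1 := h y
    have h2 := abs_real_inner_le_norm x (Gop a x y - (y + (2 * ⟪x, y⟫) • x))
    rw [hx, one_mul, inner_sub_right, inner_add_right, inner_smul_right, hy, hxx] at h2
    rw [hy] at h1
    norm_num at h2 h1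
    linarith
  have comb : ∀ k, (⟪x, pw a x k⟫ = 1 ∧ ‖pw a x k - x‖ ≤ 1) → ‖pw a x k‖ ≤ 2 := by
    intro k hk
    have := norm_sub_norm_le (pw a x k) x
    linarith
  have base : ‖(⟪x, Gop a x x⟫)⁻¹ • Gop a x x - x‖ ≤ 1 / 2 := by
    have hb := beta x hxx (by linarith)
    have h1 := h x
    rw [hx, mul_one] at hb h1
    rw [hxx] at h1
    set β := ⟪x, Gop a x x⟫
    have hβ : 29 / 10 ≤ β := by have := (abs_le.1 hb).1; linarith
    have hβp : 0 < β := by linarith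
    have e : β⁻¹ • Gop a x x - x = β⁻¹ • ((Gop a x x - (x + (2 * 1 : ℝ) • x)) + (3 - β) • x) := by
      have : (x : V) = β⁻¹ • β • x := by rw [smul_smul, inv_mul_cancel₀ hβp.ne', one_smul]
      nth_rw 3 [this]
      rw [← smul_sub]
      congr 1
      module
    rw [e, norm_smul, Real.norm_of_nonneg (by positivity)]
    have i1 : β⁻¹ ≤ 10 / 29 := by rw [inv_le_comm₀ hβp (by norm_num)]; norm_num; linarith
    have : ‖(Gop a x x - (x + (2 * 1 : ℝ) • x)) + (3 - β) • x‖ ≤ 1 / 20 + 1 / 20 := by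
      refine (norm_add_le _ _).trans ?_
      rw [norm_smul, hx, Real.norm_eq_abs, abs_sub_comm]
      linarith
    calc _ ≤ 10 / 29 * (1 / 20 + 1 / 20 : ℝ) := by gcongr
      _ ≤ _ := by norm_num
  have main : ∀ k, ⟪x, pw a x k⟫ = 1 ∧ ‖pw a x k - x‖ ≤ 1 := by
    intro k
    induction k with
    | zero => simp [pw, hx]
    | succ k ih =>
      have hb := beta _ ih.1 (comb k ih)
      have h2 := comb k ih
      have hβ : 29 / 10 ≤ ⟪x, Gop a x (pw a x k)⟫ := by have := (abs_le.1 hb).1; linarith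
      refine ⟨?_, ?_⟩
      · rw [pw, inner_smul_right, inv_mul_cancel₀ (by linarith)]
      · have := phi_lip a x (pw a x k) x hx h ih.1 hxx h2 (by linarith)
        rw [pw]
        have t := norm_sub_le_norm_sub_add_norm_sub ((⟪x, Gop a x (pw a x k)⟫)⁻¹ • Gop a x (pw a x k))
          ((⟪x, Gop a x x⟫)⁻¹ • Gop a x x) x
        linarith [ih.2]
  have hb := beta _ (main k).1 (comb k (main k))
  have h2 := comb k (main k)
  have := abs_le.1 hb
  exact ⟨(main k).1, (main k).2, h2, by linarith [this.1], by linarith [this.2]⟩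

lemma pw_step (a : Fin m → V) (x : V) (hx : ‖x‖ = 1) (h : OpB a x (1 / 20)) (k : ℕ) :
    ‖pw a x (k + 1) - pw a x k‖ ≤ (1 / 2) ^ k := by
  induction k with
  | zero =>
    have := (pw_props a x hx h 1).2.1
    simpa [pw] using this
  | succ k ih =>
    have p1 := pw_props a x hx h (k + 1)
    have p0 := pw_props a x hx h k
    have := phi_lip a x _ _ hx h p1.1 p0.1 p1.2.2.1 p0.2.2.1
    rw [pw]
    have e : pw a x (k + 1) = (⟪x, Gop a x (pw a x k)⟫)⁻¹ • Gop a x (pw a x k) := by rw [pw]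
    nth_rw 3 [e]
    refine this.trans ?_
    rw [pow_succ]; linarith

lemma pw_resid (a : Fin m → V) (x : V) (hx : ‖x‖ = 1) (h : OpB a x (1 / 20)) (k : ℕ) :
    ‖Gop a x (pw a x k) - ⟪x, Gop a x (pw a x k)⟫ • pw a x k‖ ≤ 4 * (1 / 2) ^ k := by
  have p0 := pw_props a x hx h k
  have s := pw_step a x hx h k
  rw [pw] at s
  set β := ⟪x, Gop a x (pw a x k)⟫
  have hβ : 0 < β := by linarith [p0.2.2.2.1]
  have e : Gop a x (pw a x k) - β • pw a x k = β • (β⁻¹ • Gop a x (pw a x k) - pw a x k) := by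
    rw [smul_sub, smul_smul, mul_inv_cancel₀ hβ.ne', one_smul]
  rw [e, norm_smul, Real.norm_of_nonneg hβ.le]
  have := p0.2.2.2.2
  gcongr

lemma sum_update (a : Fin m → V) (l : Fin m) {W : Type*} [AddCommGroup W] (F : V → W) (h0 : F 0 = 0) :
    ∑ j, F (Function.update a l 0 j) = ∑ j, F (a j) - F (a l) := by
  rw [eq_sub_iff_add_eq, ← Finset.add_sum_erase Finset.univ _ (Finset.mem_univ l),
    ← Finset.add_sum_erase Finset.univ (fun j => F (a j)) (Finset.mem_univ l)]
  simp only [Function.update_self, h0, zero_add]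
  rw [add_comm]
  congr 1
  refine Finset.sum_congr rfl fun j hj => ?_
  rw [Function.update_of_ne (Finset.ne_of_mem_erase hj)]

lemma Gop_update (a : Fin m → V) (l : Fin m) (x u : V) :
    Gop (Function.update a l 0) x u = Gop a x u - (m : ℝ)⁻¹ • (⟪a l, x⟫ ^ 2 * ⟪a l, u⟫) • a l := by
  rw [Gop, Gop, ← smul_sub]
  congr 1
  exact sum_update a l (fun b => (⟪b, x⟫ ^ 2 * ⟪b, u⟫) • b) (by simp)

lemma gradf_update (a : Fin m → V) (l : Fin m) (x u : V) :
    gradf (Function.update a l 0) x u = gradf a x u -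
      (m : ℝ)⁻¹ • ((⟪a l, u⟫ ^ 2 - ⟪a l, x⟫ ^ 2) * ⟪a l, u⟫) • a l := by
  rw [gradf, gradf, ← smul_sub]
  congr 1
  exact sum_update a l (fun b => ((⟪b, u⟫ ^ 2 - ⟪b, x⟫ ^ 2) * ⟪b, u⟫) • b) (by simp)

lemma sig2_update (a : Fin m → V) (l : Fin m) (x : V) :
    sig2 (Function.update a l 0) x = sig2 a x - (m : ℝ)⁻¹ * ⟪a l, x⟫ ^ 2 := by
  rw [sig2, sig2, ← mul_sub]
  congr 1
  exact sum_update a l (fun b => ⟪b, x⟫ ^ 2) (by simp)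

lemma eig_close (a : Fin m → V) (x v : V) (ε lam : ℝ) (hε0 : 0 ≤ ε) (hε : ε ≤ 1 / 100) (hx : ‖x‖ = 1)
    (hG : QB a x ε) (hv : ‖v‖ = 1) (hxv : 0 ≤ ⟪x, v⟫) (hl : 5 / 2 ≤ lam) (he : Gop a x v = lam • v) :
    ‖v - x‖ ≤ 2 * ε := by
  have h1 := hG.norm_le hε0 v
  rw [he, hv, mul_one] at h1
  set s := ⟪x, v⟫ with hs
  have hxx : ⟪x, x⟫ = 1 := by rw [real_inner_self_eq_norm_sq, hx]; norm_num
  have hs1 : s ≤ 1 := by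
    have := real_inner_le_norm x v
    rw [hx, hv] at this; linarith
  have hp : ‖v - s • x‖ ^ 2 = 1 - s ^ 2 := by
    rw [norm_sub_sq_real, norm_smul, inner_smul_right, real_inner_comm, ← hs, hx, hv,
      Real.norm_of_nonneg hxv]; ring
  have h2 : (lam - 1) * (1 - s ^ 2) ≤ ε * ‖v - s • x‖ := by
    have := real_inner_le_norm (lam • v - (v + (2 * s) • x)) (v - s • x)
    have e : ⟪lam • v - (v + (2 * s) • x), v - s • x⟫ = (lam - 1) * (1 - s ^ 2) := by
      simp only [inner_sub_left, inner_sub_right, inner_add_left, inner_smul_left, inner_smul_right,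
        conj_trivial, hxx, real_inner_comm x v, real_inner_self_eq_norm_sq v, hv, ← hs]
      ring
    rw [e] at this
    exact this.trans (by gcongr)
  set p := ‖v - s • x‖ with hpd
  have hp0 : 0 ≤ p := norm_nonneg _
  have hpe : p ≤ ε := by
    by_contra hcon
    push Not at hcon
    rw [← hp] at h2
    nlinarith
  refine abs_le_of_sq_le_sq' ?_ (by positivity) |>.2
  rw [norm_sub_sq_real, real_inner_comm, ← hs, hx, hv]
  nlinarith

lemma eig_pert (a : Fin m → V) (x v w : V) (ε lam lam' R : ℝ) (hε0 : 0 ≤ ε) (hε : ε ≤ 1 / 100) (hx : ‖x‖ = 1)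
    (hG : QB a x ε) (hv : ‖v‖ = 1) (hxv : 0 ≤ ⟪x, v⟫) (hl : 5 / 2 ≤ lam) (he : Gop a x v = lam • v)
    (hl' : 5 / 2 ≤ lam') (hw : ‖w‖ = 1) (hwv : 0 ≤ ⟪v, w⟫) (hR : ‖Gop a x w - lam' • w‖ ≤ R) :
    ‖v - w‖ ≤ 2 * R := by
  have hvx := eig_close a x v ε lam hε0 hε hx hG hv hxv hl he
  set c := ⟪v, w⟫ with hc
  set q := w - c • v with hq
  have hvv : ⟪v, v⟫ = 1 := by rw [real_inner_self_eq_norm_sq, hv]; norm_num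
  have hvq : ⟪v, q⟫ = 0 := by rw [hq, inner_sub_right, inner_smul_right, hvv, ← hc]; ring
  have hwq : w = c • v + q := by rw [hq]; abel
  have hR0 : 0 ≤ R := (norm_nonneg _).trans hR
  have hc1 : c ≤ 1 := by
    have := real_inner_le_norm v w
    rw [hv, hw] at this; linarith
  have hqq : ‖q‖ ^ 2 = 1 - c ^ 2 := by
    rw [hq, norm_sub_sq_real, norm_smul, inner_smul_right, real_inner_comm, ← hc, hv, hw,
      Real.norm_of_nonneg hwv]; ring
  have e1 : ⟪lam' • w - Gop a x w, q⟫ = lam' * ‖q‖ ^ 2 - ⟪Gop a x q, q⟫ := by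
    rw [hwq, Gop_add, Gop_smul, he]
    simp only [inner_sub_left, inner_add_left, inner_smul_left, inner_smul_right, conj_trivial,
      inner_add_right, hvq, real_inner_self_eq_norm_sq q]
    ring
  have e2 : ⟪lam' • w - Gop a x w, q⟫ ≤ R * ‖q‖ := by
    refine (real_inner_le_norm _ _).trans ?_
    rw [norm_sub_rev]; gcongr
  have e3 : ⟪x, q⟫ ^ 2 ≤ (2 * ε * ‖q‖) ^ 2 := by
    have : ⟪x, q⟫ = - ⟪v - x, q⟫ := by rw [inner_sub_left, hvq]; ring
    rw [this, neg_sq, ← sq_abs]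
    have := abs_real_inner_le_norm (v - x) q
    gcongr
    exact this.trans (by gcongr)
  have e4 := hG q
  have e5 : (m : ℝ)⁻¹ * ∑ l, ⟪a l, x⟫ ^ 2 * ⟪a l, q⟫ ^ 2 = ⟪Gop a x q, q⟫ := by
    rw [inner_Gop]; congr 1; exact Finset.sum_congr rfl fun l _ => by ring
  rw [e5] at e4
  have e6 := (abs_le.1 e4).2
  have hq0 := norm_nonneg q
  have e7 : ‖q‖ ^ 2 ≤ R * ‖q‖ := by
    have : (2 * ε * ‖q‖) ^ 2 ≤ 1 / 100 * ‖q‖ ^ 2 := by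
      have : (2 * ε) ^ 2 ≤ 1 / 100 := by nlinarith
      rw [mul_pow]; gcongr
    nlinarith [sq_nonneg ‖q‖]
  have e8 : ‖q‖ ≤ R := by
    by_contra hcon
    push Not at hcon
    nlinarith
  refine abs_le_of_sq_le_sq' ?_ (by positivity) |>.2
  rw [norm_sub_sq_real, ← hc, hv, hw]
  nlinarith

lemma exists_big_eig [FiniteDimensional ℝ V] (a : Fin m → V) (x : V) (ε : ℝ) (hε : ε ≤ 1 / 100)
    (hx : ‖x‖ = 1) (hG : QB a x ε) :
    ∃ (lam : ℝ) (v : V), v ≠ 0 ∧ Gop a x v = lam • v ∧ 5 / 2 ≤ lam := by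
  have hx0 : x ≠ 0 := by intro h; rw [h] at hx; simp at hx
  have : Nontrivial V := ⟨x, 0, hx0⟩
  let T : V →ₗ[ℝ] V :=
    { toFun := Gop a x
      map_add' := Gop_add a x
      map_smul' := fun c u => Gop_smul a x u c }
  have hT : T.IsSymmetric := fun u w => inner_Gop_comm a x u w
  have := hT.hasEigenvalue_iSup_of_finiteDimensional
  obtain ⟨v, hv⟩ := this.exists_hasEigenvector
  refine ⟨_, v, hv.2, hv.apply_eq_smul, ?_⟩
  have e5 : ∀ q, (m : ℝ)⁻¹ * ∑ l, ⟪a l, x⟫ ^ 2 * ⟪a l, q⟫ ^ 2 = ⟪Gop a x q, q⟫ := by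
    intro q
    rw [inner_Gop]; congr 1; exact Finset.sum_congr rfl fun l _ => by ring
  refine le_trans ?_ (le_ciSup (f := fun y : {y : V // y ≠ 0} => RCLike.re ⟪T y, y⟫ / ‖(y : V)‖ ^ 2) ?_ ⟨x, hx0⟩)
  · simp only [hx, RCLike.re_to_real]
    have h1 := hG x
    rw [e5, real_inner_self_eq_norm_sq, hx] at h1
    have := (abs_le.1 h1).1
    change _ ≤ ⟪Gop a x x, x⟫ / _
    norm_num at this ⊢
    linarith
  · refine ⟨4, ?_⟩
    rintro _ ⟨⟨y, hy⟩, rfl⟩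
    have hyp : 0 < ‖y‖ := norm_pos_iff.2 hy
    simp only [RCLike.re_to_real]
    rw [div_le_iff₀ (by positivity)]
    change ⟪Gop a x y, y⟫ ≤ _
    have h1 := hG y
    rw [e5] at h1
    have h2 := (abs_le.1 h1).2
    have h3 := abs_real_inner_le_norm x y
    rw [hx, one_mul] at h3
    have h4 : ⟪x, y⟫ ^ 2 ≤ ‖y‖ ^ 2 := by rw [← sq_abs]; gcongr
    nlinarith [sq_nonneg ‖y‖]

end Deterministic2

end WF

namespace WF

section Deterministic3

variable {V : Type*} [NormedAddCommGroup V] [InnerProductSpace ℝ V] {m : ℕ}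

local notation "⟪" x "," y "⟫" => inner ℝ x y

/-- The deterministic good event. -/
structure Good (a : Fin m → V) (x : V) (S T K κ ε δ : ℝ) : Prop where
  hx : ‖x‖ = 1
  hε0 : 0 ≤ ε
  hεδ : ε ≤ δ / 16
  hδ0 : 0 < δ
  hδ : δ ≤ 1 / 8
  hK : 1 ≤ K
  hS : 1 ≤ S
  hST : S ≤ T
  hm : 0 < (m : ℝ)
  hκ0 : 0 ≤ κ
  hST2 : S ^ 2 * T ^ 2 ≤ κ * m
  hκ : 20000 * K ^ 6 * κ ≤ δ
  hρ : (799 / 800 : ℝ) ^ m * T ≤ 1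
  qb : QB a x ε
  sg : |sig2 a x - 1| ≤ ε
  gx : ∀ l, |⟪a l, x⟫| ≤ K * S
  an : ∀ l, ‖a l‖ ≤ K * T
  eb : ∀ h, ‖h‖ ≤ δ → (∀ l, |⟪a l, h⟫| ≤ 3 * K * S) → EB a h (1 / 1000)
  looT : ∀ l, ∀ k ≤ m, |⟪a l, tr (Function.update a l 0) x (1 / 200) k - x⟫| ≤
    K * S * ‖tr (Function.update a l 0) x (1 / 200) k - x‖
  looP : ∀ l, |⟪a l, pw (Function.update a l 0) x m⟫| ≤ K * S * ‖pw (Function.update a l 0) x m‖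

namespace Good

variable {a : Fin m → V} {x : V} {S T K κ ε δ : ℝ}

lemma K6 (_G : Good a x S T K κ ε δ) : K ^ 2 ≤ K ^ 6 ∧ K ^ 4 ≤ K ^ 6 ∧ K ^ 5 ≤ K ^ 6 ∧ 1 ≤ K ^ 6 :=
  ⟨pow_le_pow_right₀ _G.hK (by norm_num), pow_le_pow_right₀ _G.hK (by norm_num),
    pow_le_pow_right₀ _G.hK (by norm_num), one_le_pow₀ _G.hK⟩

lemma hε (G : Good a x S T K κ ε δ) : ε ≤ 1 / 100 := by
  have := G.hεδ; have := G.hδ; linarith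

lemma S2m (G : Good a x S T K κ ε δ) : S ^ 2 / m ≤ κ := by
  rw [div_le_iff₀ G.hm]
  have h1 := G.hST2
  have : 1 ≤ T ^ 2 := one_le_pow₀ (G.hS.trans G.hST)
  nlinarith [sq_nonneg S]

lemma sigdiff (G : Good a x S T K κ ε δ) (l : Fin m) :
    0 ≤ sig2 a x - sig2 (Function.update a l 0) x ∧
    sig2 a x - sig2 (Function.update a l 0) x ≤ K ^ 2 * S ^ 2 / m ∧
    99 / 100 ≤ sig2 a x ∧ sig2 a x ≤ 101 / 100 ∧ 98 / 100 ≤ sig2 (Function.update a l 0) x := by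
  have hm := G.hm
  have e := sig2_update a l x
  have h1 : (m : ℝ)⁻¹ * ⟪a l, x⟫ ^ 2 ≤ K ^ 2 * S ^ 2 / m := by
    rw [div_eq_inv_mul]
    have : ⟪a l, x⟫ ^ 2 ≤ (K * S) ^ 2 := by
      rw [← sq_abs]; have := G.gx l; gcongr
    rw [← mul_pow]
    gcongr
  have h0 : 0 ≤ (m : ℝ)⁻¹ * ⟪a l, x⟫ ^ 2 := by positivity
  have h2 := abs_le.1 G.sg
  have h3 := G.hε
  have h4 : K ^ 2 * S ^ 2 / m ≤ 1 / 100 := by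
    have i1 : K ^ 2 * S ^ 2 / m ≤ K ^ 6 * κ := by
      rw [mul_div_assoc]
      have := G.S2m
      have := G.K6.1
      have := G.hκ0
      gcongr
    have := G.hκ
    have := G.hδ
    linarith
  refine ⟨by linarith, by linarith, by linarith [h2.1], by linarith [h2.2], by linarith [h2.1]⟩

lemma opb (G : Good a x S T K κ ε δ) (l : Fin m) : OpB (Function.update a l 0) x (1 / 20) := by
  intro u
  have hm := G.hm
  have h1 := G.qb.norm_le G.hε0 u
  rw [Gop_update]
  have e : Gop a x u - (m : ℝ)⁻¹ • (⟪a l, x⟫ ^ 2 * ⟪a l, u⟫) • a l - (u + (2 * ⟪x, u⟫) • x) =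
    (Gop a x u - (u + (2 * ⟪x, u⟫) • x)) - (m : ℝ)⁻¹ • (⟪a l, x⟫ ^ 2 * ⟪a l, u⟫) • a l := by abel
  rw [e]
  refine (norm_sub_le _ _).trans ?_
  have h2 : ‖(m : ℝ)⁻¹ • (⟪a l, x⟫ ^ 2 * ⟪a l, u⟫) • a l‖ ≤ 1 / 100 * ‖u‖ := by
    rw [norm_smul, norm_smul, Real.norm_of_nonneg (by positivity), norm_mul, norm_pow,
      Real.norm_eq_abs, Real.norm_eq_abs]
    have i1 := G.gx l
    have i2 := abs_real_inner_le_norm (a l) u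
    have i3 := G.an l
    have hK := G.hK
    have hT : 0 ≤ T := by linarith [G.hS, G.hST]
    calc (m : ℝ)⁻¹ * (|⟪a l, x⟫| ^ 2 * |⟪a l, u⟫| * ‖a l‖)
        ≤ (m : ℝ)⁻¹ * ((K * S) ^ 2 * (K * T * ‖u‖) * (K * T)) := by
          have : |⟪a l, u⟫| ≤ K * T * ‖u‖ := i2.trans (by gcongr)
          gcongr
      _ = K ^ 4 * (S ^ 2 * T ^ 2 / m) * ‖u‖ := by field_simp
      _ ≤ K ^ 6 * κ * ‖u‖ := by
          have : S ^ 2 * T ^ 2 / m ≤ κ := by rw [div_le_iff₀ hm]; exact G.hST2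
          have := G.K6.2.1
          have := G.hκ0
          gcongr
      _ ≤ 1 / 100 * ‖u‖ := by
          have := G.hκ
          have := G.hδ
          gcongr
          linarith
  have := G.hε
  nlinarith [norm_nonneg u]

lemma step_h (G : Good a x S T K κ ε δ) (h : V) (hE : EB a h (1 / 1000)) :
    ‖(x + h) - ((1 / 200) / sig2 a x) • gradf a x (x + h) - x‖ ≤ (799 / 800) * ‖h‖ := by
  have h0 : EB a (0 : V) (1 / 1000) := by intro u; simp
  have h2 := abs_le.1 G.sg
  have h3 := G.hε
  have hs : 0 < sig2 a x := by linarith [h2.1]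
  have hη : (1 / 200) / sig2 a x ≤ 1 / 50 := by rw [div_le_iff₀ hs]; linarith [h2.1]
  have hη' : 1 / 400 ≤ (1 / 200) / sig2 a x := by rw [le_div_iff₀ hs]; linarith [h2.2]
  have := contract a x h 0 ε _ G.hε G.hx G.qb hE h0 (by positivity) hη
  simp only [sub_zero, add_zero, gradf_self] at this
  have e : (x + h) - ((1 / 200) / sig2 a x) • gradf a x (x + h) - x =
    h - ((1 / 200) / sig2 a x) • gradf a x (x + h) := by abel
  rw [e]
  refine this.trans ?_
  gcongr
  linarith

set_option maxHeartbeats 1000000 in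
lemma step_d (G : Good a x S T K κ ε δ) (l : Fin m) (z z' : V) (hE : EB a (z - x) (1 / 1000))
    (hE' : EB a (z' - x) (1 / 1000)) (hn : ‖z' - x‖ ≤ δ) (hl : |⟪a l, z' - x⟫| ≤ K * S * ‖z' - x‖)
    (hd : ‖z - z'‖ ≤ 1000 * K ^ 4 * (S ^ 3 * T / m)) :
    ‖(z - ((1 / 200) / sig2 a x) • gradf a x z) -
      (z' - ((1 / 200) / sig2 (Function.update a l 0) x) • gradf (Function.update a l 0) x z')‖ ≤
      1000 * K ^ 4 * (S ^ 3 * T / m) := by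
  have hm := G.hm
  obtain ⟨s1, s2, s3, s4, s5⟩ := G.sigdiff l
  set σ := sig2 a x with hσ
  set σ' := sig2 (Function.update a l 0) x with hσ'
  have hσp : 0 < σ := by linarith
  have hσp' : 0 < σ' := by linarith
  have hK := G.hK
  have hS := G.hS
  have hT : 1 ≤ T := hS.trans G.hST
  have h0 : EB a (0 : V) (1 / 1000) := by intro u; simp
  have c1 := contract a x (z - x) (z' - x) ε ((1 / 200) / σ) G.hε G.hx G.qb hE hE' (by positivity)
    (by rw [div_le_iff₀ hσp]; linarith)
  have c2 := (grad_bounds a x (z' - x) 0 ε G.hε G.hx G.qb hE' h0).2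
  simp only [add_sub_cancel, sub_sub_sub_cancel_right, add_zero, gradf_self, sub_zero] at c1 c2
  rw [gradf_update]
  set s := (m : ℝ)⁻¹ • ((⟪a l, z'⟫ ^ 2 - ⟪a l, x⟫ ^ 2) * ⟪a l, z'⟫) • a l with hs
  have e : (z - ((1 / 200) / σ) • gradf a x z) - (z' - ((1 / 200) / σ') • (gradf a x z' - s)) =
    ((z - z') - ((1 / 200) / σ) • (gradf a x z - gradf a x z')) +
     (((1 / 200) / σ' - (1 / 200) / σ) • gradf a x z' - ((1 / 200) / σ') • s) := by
    module
  rw [e]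
  refine (norm_add_le _ _).trans ?_
  refine (add_le_add c1 (norm_sub_le _ _)).trans ?_
  set Q := S ^ 3 * T / m with hQ
  have hQ0 : 0 ≤ Q := by positivity
  have hKQ : 0 ≤ K ^ 4 * Q := by positivity
  have b1 : ‖((1 / 200) / σ' - (1 / 200) / σ) • gradf a x z'‖ ≤ (1 / 200) * (8 * K ^ 4 * Q) := by
    rw [norm_smul, Real.norm_eq_abs]
    have e1 : (1 / 200) / σ' - (1 / 200) / σ = (1 / 200) * ((σ - σ') / (σ * σ')) := by field_simp
    rw [e1, abs_of_nonneg (by positivity)]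
    have e2 : (σ - σ') / (σ * σ') ≤ 11 / 10 * (K ^ 2 * S ^ 2 / m) := by
      rw [div_le_iff₀ (by positivity)]
      have i : 97 / 100 ≤ σ * σ' := by nlinarith
      have : 0 ≤ K ^ 2 * S ^ 2 / m := by positivity
      nlinarith
    have e3 : ‖gradf a x z'‖ ≤ 7 := by linarith [G.hδ]
    have e4 : K ^ 2 * S ^ 2 / m ≤ K ^ 4 * Q := by
      rw [hQ, mul_div_assoc]
      have i1 : K ^ 2 ≤ K ^ 4 := pow_le_pow_right₀ hK (by norm_num)
      have i2 : S ^ 2 ≤ S ^ 3 * T := by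
        have : S ^ 2 ≤ S ^ 3 := pow_le_pow_right₀ hS (by norm_num)
        nlinarith [sq_nonneg S]
      gcongr
    calc _ ≤ 1 / 200 * (11 / 10 * (K ^ 2 * S ^ 2 / m)) * 7 := by gcongr
      _ ≤ 1 / 200 * (11 / 10 * (K ^ 4 * Q)) * 7 := by gcongr
      _ ≤ _ := by linarith [hKQ]
  have b2 : ‖((1 / 200) / σ') • s‖ ≤ (1 / 200) * (7 * K ^ 4 * Q) := by
    rw [norm_smul, Real.norm_of_nonneg (by positivity), hs, norm_smul, norm_smul,
      Real.norm_of_nonneg (by positivity : 0 ≤ (m : ℝ)⁻¹), Real.norm_eq_abs]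
    have i1 : (1 / 200) / σ' ≤ 1 / 200 * (11 / 10) := by
      rw [div_le_iff₀ hσp']; nlinarith
    have hr : |⟪a l, z' - x⟫| ≤ K * S := hl.trans (by
      have : ‖z' - x‖ ≤ 1 := by linarith [G.hδ]
      have : 0 ≤ K * S := by positivity
      nlinarith)
    have hg := G.gx l
    have i2 : |(⟪a l, z'⟫ ^ 2 - ⟪a l, x⟫ ^ 2) * ⟪a l, z'⟫| ≤ 6 * (K * S) ^ 3 := by
      have e1 : ⟪a l, z'⟫ = ⟪a l, x⟫ + ⟪a l, z' - x⟫ := by rw [inner_sub_right]; ring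
      rw [e1]
      generalize ⟪a l, x⟫ = g at *
      generalize ⟪a l, z' - x⟫ = r at *
      have e2 : ((g + r) ^ 2 - g ^ 2) * (g + r) = r * (2 * g + r) * (g + r) := by ring
      rw [e2, abs_mul, abs_mul]
      have j1 : |2 * g + r| ≤ 3 * (K * S) := by
        rw [abs_le] at *; constructor <;> linarith [hg.1, hg.2, hr.1, hr.2]
      have j2 : |g + r| ≤ 2 * (K * S) := by
        rw [abs_le] at *; constructor <;> linarith [hg.1, hg.2, hr.1, hr.2]
      calc _ ≤ (K * S) * (3 * (K * S)) * (2 * (K * S)) := by gcongr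
        _ = _ := by ring
    have i3 := G.an l
    calc _ ≤ 1 / 200 * (11 / 10) * ((m : ℝ)⁻¹ * (6 * (K * S) ^ 3 * (K * T))) := by gcongr
      _ = 1 / 200 * (11 / 10 * 6) * (K ^ 4 * Q) := by rw [hQ]; field_simp
      _ ≤ _ := by linarith [hKQ]
  have hη' : 1 / 400 ≤ (1 / 200) / σ := by rw [le_div_iff₀ hσp]; linarith
  have hη2 : (1 / 200) / σ ≤ 1 := by rw [div_le_iff₀ hσp]; linarith
  have b3 : (1 - 1 / 200 / σ / 2) * ‖z - z'‖ ≤ (1 - 1 / 800) * (1000 * K ^ 4 * Q) := by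
    apply mul_le_mul (by linarith) hd (norm_nonneg _) (by norm_num)
  have : 0 ≤ K ^ 4 * Q := by positivity
  linarith [b1, b2, b3]

set_option maxHeartbeats 1000000 in
lemma init [FiniteDimensional ℝ V] (G : Good a x S T K κ ε δ) (z0 : V) (lam : ℝ)
    (h1 : Gop a x z0 = lam • z0)
    (h2 : ∀ (μ : ℝ) (w : V), w ≠ 0 → Gop a x w = μ • w → μ ≤ lam)
    (h3 : ‖z0‖ ^ 2 = sig2 a x) (h4 : 0 ≤ ⟪x, z0⟫) :
    ‖z0 - x‖ ≤ 3 * ε ∧ ∀ l, ‖z0 - tr (Function.update a l 0) x (1 / 200) 0‖ ≤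
      1000 * K ^ 4 * (S ^ 3 * T / m) := by
  have hm := G.hm
  have hK := G.hK
  have hS := G.hS
  have hT : 1 ≤ T := hS.trans G.hST
  have hε := G.hε
  obtain ⟨lam1, v1, hv1, hv1', hlam1⟩ := exists_big_eig a x ε G.hε G.hx G.qb
  have hlam : 5 / 2 ≤ lam := hlam1.trans (h2 _ _ hv1 hv1')
  have hsg := abs_le.1 G.sg
  set σ := ‖z0‖ with hσ
  have hσ0 : 0 ≤ σ := norm_nonneg _
  have hσl : 99 / 100 ≤ σ := by nlinarith [hsg.1]
  have hσu : σ ≤ 101 / 100 := by nlinarith [hsg.2]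
  set v := σ⁻¹ • z0 with hv
  have hvn : ‖v‖ = 1 := by
    rw [hv, norm_smul, Real.norm_of_nonneg (by positivity), ← hσ, inv_mul_cancel₀ (by linarith)]
  have hz0 : z0 = σ • v := by rw [hv, smul_smul, mul_inv_cancel₀ (by linarith), one_smul]
  have hxv : 0 ≤ ⟪x, v⟫ := by rw [hv, inner_smul_right]; positivity
  have hev : Gop a x v = lam • v := by rw [hv, Gop_smul, h1, smul_comm]
  have hvx := eig_close a x v ε lam G.hε0 hε G.hx G.qb hvn hxv hlam hev
  constructor
  · have e : z0 - x = (v - x) + (σ - 1) • v := by rw [hz0]; module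
    rw [e]
    refine (norm_add_le _ _).trans ?_
    rw [norm_smul, hvn, Real.norm_eq_abs]
    have : |σ - 1| ≤ ε := by
      rw [abs_le]; constructor <;> nlinarith [hsg.1, hsg.2, G.hε0]
    linarith
  · intro l
    obtain ⟨s1, s2, s3, s4, s5⟩ := G.sigdiff l
    have ob := G.opb l
    obtain ⟨p1, p2, p3, p4, p5⟩ := pw_props _ x G.hx ob m
    have pr := pw_resid _ x G.hx ob m
    have lp := G.looP l
    rw [tr]
    set w := pw (Function.update a l 0) x m with hw
    set β := ⟪x, Gop (Function.update a l 0) x w⟫ with hβ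
    set τ := √(sig2 (Function.update a l 0) x) with hτ
    have hwn : 1 ≤ ‖w‖ := by
      have := real_inner_le_norm x w
      rw [p1, G.hx, one_mul] at this; exact this
    have hwp : 0 < ‖w‖ := by linarith
    set b := ‖w‖⁻¹ • w with hb
    have hbn : ‖b‖ = 1 := by
      rw [hb, norm_smul, Real.norm_of_nonneg (by positivity), inv_mul_cancel₀ hwp.ne']
    have hvb : 0 ≤ ⟪v, b⟫ := by
      rw [hb, inner_smul_right]
      have e1 : ⟪v, w⟫ = ⟪x, w⟫ + ⟪v - x, w⟫ := by rw [inner_sub_left]; ring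
      have e2 := abs_le.1 (abs_real_inner_le_norm (v - x) w)
      have e3 : ‖v - x‖ * ‖w‖ ≤ (2 * ε) * 2 := by
        have := G.hε0
        gcongr
      have : 0 ≤ ⟪v, w⟫ := by rw [e1, p1]; linarith [e2.1]
      positivity
    set Q := S ^ 3 * T / m with hQ
    have hQ0 : 0 ≤ Q := by positivity
    have hS3T : 1 ≤ S ^ 3 * T := one_le_mul_of_one_le_of_one_le (one_le_pow₀ hS) hT
    have hK4 : 1 ≤ K ^ 4 := one_le_pow₀ hK
    have hinvm : (m : ℝ)⁻¹ ≤ Q := by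
      rw [hQ, div_eq_inv_mul]; exact le_mul_of_one_le_right (by positivity) hS3T
    have hR : ‖Gop a x b - β • b‖ ≤ 5 * K ^ 4 * Q := by
      have e1 : Gop a x b - β • b = ‖w‖⁻¹ • ((Gop (Function.update a l 0) x w - β • w) +
          (m : ℝ)⁻¹ • (⟪a l, x⟫ ^ 2 * ⟪a l, w⟫) • a l) := by
        rw [Gop_update, hb, Gop_smul]; module
      rw [e1, norm_smul, Real.norm_of_nonneg (by positivity)]
      have hpm : (1 / 2 : ℝ) ^ m ≤ (m : ℝ)⁻¹ := by
        rw [one_div, inv_pow]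
        apply inv_anti₀ hm
        exact_mod_cast (Nat.lt_two_pow_self).le
      have i1 : ‖(m : ℝ)⁻¹ • (⟪a l, x⟫ ^ 2 * ⟪a l, w⟫) • a l‖ ≤ K ^ 4 * Q * ‖w‖ := by
        rw [norm_smul, norm_smul, Real.norm_of_nonneg (by positivity), norm_mul, norm_pow,
          Real.norm_eq_abs, Real.norm_eq_abs]
        have j1 := G.gx l
        have j3 := G.an l
        calc _ ≤ (m : ℝ)⁻¹ * ((K * S) ^ 2 * (K * S * ‖w‖) * (K * T)) := by gcongr
          _ = _ := by rw [hQ]; field_simp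
      calc _ ≤ ‖w‖⁻¹ * (4 * Q * ‖w‖ + K ^ 4 * Q * ‖w‖) := by
            gcongr
            refine (norm_add_le _ _).trans (add_le_add ?_ i1)
            refine pr.trans ?_
            have q1 : (1 / 2 : ℝ) ^ m ≤ Q := hpm.trans hinvm
            have q2 : Q ≤ Q * ‖w‖ := le_mul_of_one_le_right hQ0 hwn
            linarith
        _ = 4 * Q + K ^ 4 * Q := by field_simp
        _ ≤ _ := by
            have q3 : Q ≤ K ^ 4 * Q := le_mul_of_one_le_left hQ0 hK4
            linarith
    have hvb' := eig_pert a x v b ε lam β _ G.hε0 hε G.hx G.qb hvn hxv hlam hev (by linarith) hbn hvb hR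
    have hτ2 : τ ^ 2 = sig2 (Function.update a l 0) x := Real.sq_sqrt (by linarith)
    have hτ0 : 0 ≤ τ := Real.sqrt_nonneg _
    have hτu : τ ≤ 2 := by nlinarith
    have hστ : |σ - τ| ≤ K ^ 4 * Q := by
      have j0 : K ^ 2 * S ^ 2 / m ≤ K ^ 4 * Q := by
        rw [hQ, mul_div_assoc]
        have i1 : K ^ 2 ≤ K ^ 4 := pow_le_pow_right₀ hK (by norm_num)
        have i2 : S ^ 2 ≤ S ^ 3 * T := by
          have : S ^ 2 ≤ S ^ 3 := pow_le_pow_right₀ hS (by norm_num)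
          nlinarith [sq_nonneg S]
        gcongr
      have j1 : 0 ≤ (σ - τ) * (σ + τ) := by nlinarith
      have j2 : (σ - τ) * (σ + τ) ≤ K ^ 4 * Q := by nlinarith
      have j3 : 9 / 10 ≤ τ := by nlinarith
      have j4 : 0 ≤ σ - τ := by
        by_contra hcon
        push Not at hcon
        nlinarith
      rw [abs_of_nonneg j4]
      nlinarith
    have e : z0 - (τ / ‖w‖) • w = (σ - τ) • v + τ • (v - b) := by
      rw [hz0, hb, div_eq_mul_inv]; module
    rw [e]
    refine (norm_add_le _ _).trans ?_
    rw [norm_smul _ v, norm_smul _ (v - b), hvn, Real.norm_eq_abs, Real.norm_of_nonneg hτ0]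
    have : τ * ‖v - b‖ ≤ 2 * (2 * (5 * K ^ 4 * Q)) := by gcongr
    have : 0 ≤ K ^ 4 * Q := by positivity
    linarith

set_option maxHeartbeats 1000000 in
theorem main [FiniteDimensional ℝ V] (G : Good a x S T K κ ε δ) (z : ℕ → V) (lam : ℝ)
    (h1 : Gop a x (z 0) = lam • z 0)
    (h2 : ∀ (μ : ℝ) (w : V), w ≠ 0 → Gop a x w = μ • w → μ ≤ lam)
    (h3 : ‖z 0‖ ^ 2 = sig2 a x) (h4 : 0 ≤ ⟪x, z 0⟫)
    (hz : ∀ k, z (k + 1) = z k - ((1 / 200) / sig2 a x) • gradf a x (z k)) :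
    ‖z 0 - x‖ ≤ 1 / 8 ∧ ∀ k, ‖z k - x‖ ≤ (799 / 800) ^ k * ‖z 0 - x‖ := by
  obtain ⟨i1, i2⟩ := G.init (z 0) lam h1 h2 h3 h4
  have hm := G.hm
  have hK := G.hK
  have hS := G.hS
  have hT : 1 ≤ T := hS.trans G.hST
  have hδ := G.hδ
  have hδ0 := G.hδ0
  have hεδ := G.hεδ
  set t := fun l : Fin m => tr (Function.update a l 0) x (1 / 200) with ht
  set D := 1000 * K ^ 4 * (S ^ 3 * T / m) with hD
  have hD0 : 0 ≤ D := by positivity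
  have hq : S ^ 2 * T ^ 2 / m ≤ κ := by rw [div_le_iff₀ hm]; exact G.hST2
  have hKTD : K * T * D ≤ S / 20 := by
    have e : K * T * D = 1000 * K ^ 5 * (S ^ 2 * T ^ 2 / m) * S := by rw [hD]; field_simp
    rw [e]
    have := G.K6.2.2.1
    have := G.hκ
    have := G.hκ0
    calc _ ≤ 1000 * K ^ 6 * κ * S := by gcongr
      _ ≤ (1 / 20) * S := by gcongr; linarith
      _ = _ := by ring
  have hDδ : D ≤ δ / 20 := by
    have e : D = 1000 * K ^ 4 * (S ^ 2 * T ^ 2 / m) * (S / T) := by rw [hD]; field_simp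
    rw [e]
    have := G.K6.2.1
    have := G.hκ
    have := G.hκ0
    have hST : S / T ≤ 1 := by rw [div_le_one (by linarith)]; exact G.hST
    calc _ ≤ 1000 * K ^ 6 * κ * 1 := by gcongr
      _ ≤ _ := by linarith
  have h0 : ‖z 0 - x‖ ≤ δ / 2 := by linarith
  have hρk : ∀ k, ((799 / 800 : ℝ)) ^ k ≤ 1 := fun k => pow_le_one₀ (by norm_num) (by norm_num)
  -- consequences of the induction hypothesis
  have cons : ∀ k ≤ m, ‖z k - x‖ ≤ (799 / 800) ^ k * ‖z 0 - x‖ → (∀ l, ‖z k - t l k‖ ≤ D) →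
      EB a (z k - x) (1 / 1000) ∧ ∀ l, ‖t l k - x‖ ≤ δ ∧ EB a (t l k - x) (1 / 1000) := by
    intro k hk hh hd
    have hzk : ‖z k - x‖ ≤ δ / 2 := by
      have := hρk k
      have := norm_nonneg (z 0 - x)
      nlinarith
    have htn : ∀ l, ‖t l k - x‖ ≤ δ := by
      intro l
      have e : t l k - x = (z k - x) - (z k - t l k) := by abel
      rw [e]
      refine (norm_sub_le _ _).trans ?_
      linarith [hd l]
    have hal : ∀ j l, |⟪a j, z k - t l k⟫| ≤ S / 20 := by
      intro j l
      refine (abs_real_inner_le_norm _ _).trans (le_trans ?_ hKTD)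
      have := G.an j
      have := hd l
      gcongr
    have hKS : S ≤ K * S := by nlinarith
    have hz1 : ∀ l, |⟪a l, z k - x⟫| ≤ 2 * K * S := by
      intro l
      have e : ⟪a l, z k - x⟫ = ⟪a l, z k - t l k⟫ + ⟪a l, t l k - x⟫ := by
        rw [← inner_add_right]; congr 1; abel
      rw [e]
      refine (abs_add_le _ _).trans ?_
      have i1 := hal l l
      have i2 := G.looT l k hk
      have i3 : K * S * ‖t l k - x‖ ≤ K * S * 1 := by
        have := htn l
        gcongr; linarith
      linarith
    refine ⟨G.eb _ (by linarith) (fun l => (hz1 l).trans (by linarith)), fun l => ⟨htn l, ?_⟩⟩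
    refine G.eb _ (htn l) (fun j => ?_)
    have e : ⟪a j, t l k - x⟫ = ⟪a j, z k - x⟫ - ⟪a j, z k - t l k⟫ := by
      rw [← inner_sub_right]; congr 1; abel
    rw [e]
    refine (abs_sub _ _).trans ?_
    linarith [hz1 j, hal j l]
  have stepz : ∀ k, ‖z k - x‖ ≤ (799 / 800) ^ k * ‖z 0 - x‖ → EB a (z k - x) (1 / 1000) →
      ‖z (k + 1) - x‖ ≤ (799 / 800) ^ (k + 1) * ‖z 0 - x‖ := by
    intro k hh hE
    have := G.step_h _ hE
    rw [add_sub_cancel] at this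
    rw [hz, pow_succ]
    refine this.trans ?_
    linarith
  have ind : ∀ k ≤ m, ‖z k - x‖ ≤ (799 / 800) ^ k * ‖z 0 - x‖ ∧ (∀ l, ‖z k - t l k‖ ≤ D) := by
    intro k
    induction k with
    | zero => intro _; exact ⟨by simp, i2⟩
    | succ k ih =>
      intro hk
      have hk' : k ≤ m := by omega
      obtain ⟨ih1, ih2⟩ := ih hk'
      obtain ⟨c1, c2⟩ := cons k hk' ih1 ih2
      refine ⟨stepz k ih1 c1, fun l => ?_⟩
      have := G.step_d l (z k) (t l k) c1 (c2 l).2 (c2 l).1 (G.looT l k hk') (ih2 l)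
      rw [hz]
      exact this
  refine ⟨by linarith, fun k => ?_⟩
  by_cases hkm : k ≤ m
  · exact (ind k hkm).1
  · push Not at hkm
    induction k, hkm.le using Nat.le_induction with
    | base => exact (ind m le_rfl).1
    | succ k hk ih =>
      have ihk : ‖z k - x‖ ≤ (799 / 800) ^ k * ‖z 0 - x‖ := by
        rcases hk.eq_or_lt with h | h
        · rw [← h]; exact (ind m le_rfl).1
        · exact ih h
      refine stepz k ihk (G.eb _ ?_ fun l => ?_)
      · have := hρk k
        have := norm_nonneg (z 0 - x)
        nlinarith
      · refine (abs_real_inner_le_norm _ _).trans ?_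
        have hpk : (799 / 800 : ℝ) ^ k ≤ (799 / 800 : ℝ) ^ m :=
          pow_le_pow_of_le_one (by norm_num) (by norm_num) hk
        have e1 : ‖z k - x‖ ≤ (799 / 800 : ℝ) ^ m := by
          have := norm_nonneg (z 0 - x)
          have : (0 : ℝ) ≤ (799 / 800 : ℝ) ^ k := by positivity
          nlinarith
        have := G.an l
        calc _ ≤ K * T * (799 / 800 : ℝ) ^ m := by gcongr
          _ = K * ((799 / 800 : ℝ) ^ m * T) := by ring
          _ ≤ K * 1 := by have := G.hρ; gcongr
          _ ≤ _ := by nlinarith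

end Good

end Deterministic3

end WF

namespace WF

section Tail

variable {V : Type*} [NormedAddCommGroup V] [InnerProductSpace ℝ V] {m : ℕ}

local notation "⟪" x "," y "⟫" => inner ℝ x y

/-- Uniform tail bound. -/
def TB (a : Fin m → V) (K1 N : ℝ) : Prop :=
  ∀ i : ℕ, i ≤ m → ∀ u : V, ‖u‖ ≤ 1 →
    ∑ l, (max (|⟪a l, u⟫| - 2 * 2 ^ i) 0) ^ 2 ≤ K1 * (N + m * Real.exp (-(4 ^ i / 4)))

lemma quartic_layer (I : ℕ) (s : ℝ) (h0 : 0 ≤ s) (h : s ≤ 4 * 2 ^ I) :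
    s ^ 4 ≤ 256 + 256 * ∑ i ∈ Finset.range I, 4 ^ i * (max (s - 2 * 2 ^ i) 0) ^ 2 := by
  induction I with
  | zero =>
    have : s ^ 4 ≤ 4 ^ 4 := by
      have : s ≤ 4 := by simpa using h
      gcongr
    simp; linarith
  | succ I ih =>
    rw [Finset.sum_range_succ]
    by_cases hs : s ≤ 4 * 2 ^ I
    · have := ih hs
      have : 0 ≤ (4:ℝ) ^ I * (max (s - 2 * 2 ^ I) 0) ^ 2 := by positivity
      linarith
    · push Not at hs
      have h1 : s / 2 ≤ max (s - 2 * 2 ^ I) 0 := le_max_of_le_left (by linarith)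
      have h2 : (s / 2) ^ 2 ≤ (max (s - 2 * 2 ^ I) 0) ^ 2 := by gcongr
      have h3 : s ^ 2 ≤ 64 * 4 ^ I := by
        have : s ^ 2 ≤ (4 * 2 ^ (I + 1)) ^ 2 := by gcongr
        refine this.trans (le_of_eq ?_)
        rw [show (4:ℝ) = 2 ^ 2 by norm_num, ← pow_mul]; ring
      have h4 : s ^ 4 ≤ 256 * (4 ^ I * (max (s - 2 * 2 ^ I) 0) ^ 2) := by
        calc s ^ 4 = s ^ 2 * (4 * (s / 2) ^ 2) := by ring
          _ ≤ (64 * 4 ^ I) * (4 * (max (s - 2 * 2 ^ I) 0) ^ 2) := by gcongr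
          _ = _ := by ring
      have : 0 ≤ ∑ i ∈ Finset.range I, (4:ℝ) ^ i * (max (s - 2 * 2 ^ i) 0) ^ 2 := by positivity
      linarith

lemma sum_four_pow (I : ℕ) : ∑ i ∈ Finset.range I, (4:ℝ) ^ i ≤ 4 ^ I := by
  induction I with
  | zero => simp
  | succ I ih => rw [Finset.sum_range_succ, pow_succ]; have : (0:ℝ) ≤ 4 ^ I := by positivity
                 linarith

lemma sum_four_exp (I : ℕ) :
    ∑ i ∈ Finset.range I, (4:ℝ) ^ i * Real.exp (-(4 ^ i / 4)) ≤ 43 := by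
  have h1 : ∀ i : ℕ, (4:ℝ) ^ i * Real.exp (-(4 ^ i / 4)) ≤ 32 * (1 / 4) ^ i := by
    intro i
    have h : 0 < (4:ℝ) ^ i := by positivity
    have h2 := Real.quadratic_le_exp_of_nonneg (x := 4 ^ i / 4) (by positivity)
    rw [Real.exp_neg, ← div_eq_mul_inv, div_le_iff₀ (Real.exp_pos _)]
    rw [one_div, inv_pow]
    generalize (4:ℝ) ^ i = y at *
    calc y = 32 * y⁻¹ * (y ^ 2 / 32) := by field_simp
      _ ≤ 32 * y⁻¹ * Real.exp (y / 4) := by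
        gcongr
        nlinarith
  have h2 : ∀ I : ℕ, ∑ i ∈ Finset.range I, (32:ℝ) * (1 / 4) ^ i ≤ 43 - 43 * (1 / 4) ^ I := by
    intro I
    induction I with
    | zero => norm_num
    | succ I ih =>
      rw [Finset.sum_range_succ, pow_succ]
      have : (0:ℝ) ≤ (1 / 4) ^ I := by positivity
      have : ((1:ℝ) / 4) ^ I ≤ 1 := pow_le_one₀ (by norm_num) (by norm_num)
      linarith
  refine (Finset.sum_le_sum fun i _ => h1 i).trans ((h2 I).trans ?_)
  have : (0:ℝ) ≤ (1 / 4) ^ I := by positivity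
  linarith

lemma TB.quartic {a : Fin m → V} {K1 N : ℝ} (h : TB a K1 N) (hm : 0 < (m:ℝ)) (hK1 : 0 ≤ K1)
    (hN : 0 ≤ N) (I : ℕ) (hI : I ≤ m) (h4 : 4 ^ I * N ≤ m) (u : V) (hu : ‖u‖ ≤ 1) :
    (m : ℝ)⁻¹ * ∑ l, (min |⟪a l, u⟫| (4 * 2 ^ I)) ^ 4 ≤ 256 + 256 * 44 * K1 := by
  have h1 : ∀ l, (min |⟪a l, u⟫| (4 * 2 ^ I)) ^ 4 ≤
      256 + 256 * ∑ i ∈ Finset.range I, 4 ^ i * (max (|⟪a l, u⟫| - 2 * 2 ^ i) 0) ^ 2 := by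
    intro l
    refine (quartic_layer I _ (by positivity) (min_le_right _ _)).trans ?_
    gcongr
    exact min_le_left _ _
  have h2 : ∑ l, (min |⟪a l, u⟫| (4 * 2 ^ I)) ^ 4 ≤ m * 256 + 256 * (∑ i ∈ Finset.range I,
      4 ^ i * (K1 * (N + m * Real.exp (-(4 ^ i / 4))))) := by
    refine (Finset.sum_le_sum fun l _ => h1 l).trans ?_
    rw [Finset.sum_add_distrib, ← Finset.mul_sum, Finset.sum_comm]
    simp only [Finset.sum_const, Finset.card_univ, Fintype.card_fin, nsmul_eq_mul]
    gcongr with i hi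
    rw [← Finset.mul_sum]
    gcongr
    exact h i (by simp at hi; omega) u hu
  have h3 : ∑ i ∈ Finset.range I, (4:ℝ) ^ i * (K1 * (N + m * Real.exp (-(4 ^ i / 4)))) =
      K1 * (N * ∑ i ∈ Finset.range I, (4:ℝ) ^ i +
        m * ∑ i ∈ Finset.range I, (4:ℝ) ^ i * Real.exp (-(4 ^ i / 4))) := by
    rw [Finset.mul_sum, Finset.mul_sum, ← Finset.sum_add_distrib, Finset.mul_sum]
    refine Finset.sum_congr rfl fun i _ => by ring
  rw [h3] at h2
  have h5 : N * ∑ i ∈ Finset.range I, (4:ℝ) ^ i ≤ m := by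
    refine le_trans ?_ h4
    rw [mul_comm]
    gcongr
    exact sum_four_pow I
  have h6 : (m:ℝ) * ∑ i ∈ Finset.range I, (4:ℝ) ^ i * Real.exp (-(4 ^ i / 4)) ≤ m * 43 := by
    gcongr; exact sum_four_exp I
  rw [inv_mul_le_iff₀ hm]
  have : K1 * (N * ∑ i ∈ Finset.range I, (4:ℝ) ^ i +
        m * ∑ i ∈ Finset.range I, (4:ℝ) ^ i * Real.exp (-(4 ^ i / 4))) ≤ K1 * (m + m * 43) := by
    gcongr
  linarith

lemma exists_four_pow (R : ℝ) (hR : 1 ≤ R) : ∃ J : ℕ, R ≤ 4 ^ J ∧ 4 ^ J ≤ 4 * R := by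
  obtain ⟨k, h1, h2⟩ := exists_nat_pow_near hR (by norm_num : (1:ℝ) < 4)
  exact ⟨k + 1, h2.le, by rw [pow_succ]; linarith⟩

lemma le_of_four_pow {I m : ℕ} (h : (4:ℝ) ^ I ≤ m) : I ≤ m := by
  have h1 : (4:ℕ) ^ I ≤ m := by exact_mod_cast h
  exact (Nat.lt_pow_self (by norm_num)).le.trans h1

/-- Data: `L = log m`. -/
lemma TB.an {a : Fin m → V} {K1 N L : ℝ} (h : TB a K1 N) (hm : 0 < (m:ℝ)) (hK1 : 1 ≤ K1)
    (hL : 1 ≤ L) (hLm : L = Real.log m) (hLN : L ≤ N) (hNL : 16 * (N * L) ≤ m) (l : Fin m) :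
    ‖a l‖ ≤ (8 + 2 * K1) * √N := by
  obtain ⟨J, hJ1, hJ2⟩ := exists_four_pow (4 * L) (by linarith)
  have hJm : J ≤ m := le_of_four_pow (by nlinarith)
  have hN : 1 ≤ N := hL.trans hLN
  by_cases h0 : ‖a l‖ = 0
  · rw [h0]; positivity
  have hu : ‖(‖a l‖⁻¹ • a l)‖ = 1 := by
    rw [norm_smul, norm_inv, norm_norm, inv_mul_cancel₀ h0]
  have h1 := h J hJm _ hu.le
  have hexp : (m:ℝ) * Real.exp (-(4 ^ J / 4)) ≤ 1 := by
    have : Real.exp (-(4 ^ J / 4)) ≤ Real.exp (-L) := Real.exp_le_exp.2 (by linarith)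
    rw [hLm, Real.exp_neg (Real.log m), Real.exp_log hm] at this
    calc (m:ℝ) * Real.exp (-(4 ^ J / 4)) ≤ m * (m:ℝ)⁻¹ := by gcongr
      _ = 1 := mul_inv_cancel₀ hm.ne'
  have h2 := (Finset.single_le_sum (f := fun l' => (max (|⟪a l', ‖a l‖⁻¹ • a l⟫| - 2 * 2 ^ J) 0) ^ 2)
    (fun _ _ => by positivity) (Finset.mem_univ l)).trans h1
  have e : |⟪a l, ‖a l‖⁻¹ • a l⟫| = ‖a l‖ := by
    rw [inner_smul_right, real_inner_self_eq_norm_sq, pow_two, ← mul_assoc, inv_mul_cancel₀ h0,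
      one_mul, abs_norm]
  simp only [e] at h2
  have h3 : (max (‖a l‖ - 2 * 2 ^ J) 0) ^ 2 ≤ (2 * K1 * √N) ^ 2 := by
    rw [mul_pow, Real.sq_sqrt (by linarith)]
    refine h2.trans ?_
    calc _ ≤ K1 * (N + 1) := by gcongr
      _ ≤ K1 * (2 * N) := by gcongr; linarith
      _ ≤ K1 * K1 * (2 * N) := by
          rw [mul_assoc]; exact le_mul_of_one_le_left (by positivity) hK1
      _ ≤ _ := by
          have : 0 ≤ K1 * K1 * N := by positivity
          linarith
  have h4 := (le_max_left _ _).trans (abs_le_of_sq_le_sq' h3 (by positivity)).2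
  have h5 : (2:ℝ) ^ J ≤ 4 * √N := by
    apply le_of_sq_le_sq _ (by positivity)
    rw [mul_pow, Real.sq_sqrt (by linarith), ← pow_mul, mul_comm J, pow_mul]
    norm_num
    linarith
  linarith

lemma TB.eb {a : Fin m → V} {K1 K N L κ δ : ℝ} (h : TB a K1 N) (hm : 0 < (m:ℝ)) (hK1 : 1 ≤ K1)
    (hK : 1 ≤ K) (hδ0 : 0 < δ) (hδ1 : δ ≤ 1)
    (hL : 1 ≤ L) (hLm : L = Real.log m) (hLN : L ≤ N) (hκ0 : 0 ≤ κ) (hNL : N * L ≤ κ * m)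
    (hκ1 : 16 * κ ≤ 1) (hκ2 : 40 * K ^ 2 * κ ≤ δ ^ 2)
    (hfin : (256 + 256 * 44 * K1) * δ ^ 2 + 72 * K ^ 2 * K1 * κ ≤ 1 / 1000) (g : V) (hg : ‖g‖ ≤ δ)
    (hg2 : ∀ l, |⟪a l, g⟫| ≤ 3 * K * √L) : EB a g (1 / 1000) := by
  have hN : 1 ≤ N := hL.trans hLN
  have hNm : 16 * (N * L) ≤ m := by
    refine le_trans (by linarith : _ ≤ 16 * (κ * m)) ?_
    nlinarith
  obtain ⟨J, hJ1, hJ2⟩ := exists_four_pow (4 * L) (by linarith)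
  have hJm : J ≤ m := le_of_four_pow (by nlinarith)
  obtain ⟨I, hI1, hI2⟩ := exists_four_pow (1 + 9 * K ^ 2 * L / δ ^ 2)
    (by have : 0 ≤ 9 * K ^ 2 * L / δ ^ 2 := by positivity
        linarith)
  have hIm : 4 ^ I * N ≤ (m : ℝ) := by
    have i1 : 1 ≤ K ^ 2 * L / δ ^ 2 := by
      rw [le_div_iff₀ (by positivity)]
      have : δ ^ 2 ≤ 1 := pow_le_one₀ hδ0.le hδ1
      have : 1 ≤ K ^ 2 := one_le_pow₀ hK
      nlinarith
    have i2 : (4:ℝ) ^ I ≤ 40 * (K ^ 2 * L / δ ^ 2) := by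
      refine hI2.trans ?_
      have : 9 * K ^ 2 * L / δ ^ 2 = 9 * (K ^ 2 * L / δ ^ 2) := by ring
      rw [this]; linarith
    calc 4 ^ I * N ≤ 40 * (K ^ 2 * L / δ ^ 2) * N := by gcongr
      _ = 40 * K ^ 2 / δ ^ 2 * (N * L) := by ring
      _ ≤ 40 * K ^ 2 / δ ^ 2 * (κ * m) := by gcongr
      _ = (40 * K ^ 2 * κ) / δ ^ 2 * m := by ring
      _ ≤ 1 * m := by gcongr; rw [div_le_one (by positivity)]; exact hκ2
      _ = m := one_mul _
  have hI' : I ≤ m := le_of_four_pow (by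
    refine le_trans ?_ hIm
    exact le_mul_of_one_le_right (by positivity) hN)
  set K2 := 256 + 256 * 44 * K1 with hK2
  -- quartic bound for g
  have q1 : (m:ℝ)⁻¹ * ∑ l, ⟪a l, g⟫ ^ 4 ≤ K2 * δ ^ 4 := by
    have h1 := h.quartic hm (by linarith) (by linarith) I hI' hIm (δ⁻¹ • g) (by
      rw [norm_smul, norm_inv, Real.norm_of_nonneg hδ0.le, inv_mul_le_iff₀ hδ0]; linarith)
    have e : ∀ l, (min |⟪a l, δ⁻¹ • g⟫| (4 * 2 ^ I)) ^ 4 = ⟪a l, g⟫ ^ 4 / δ ^ 4 := by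
      intro l
      have e1 : |⟪a l, δ⁻¹ • g⟫| = |⟪a l, g⟫| / δ := by
        rw [inner_smul_right, abs_mul, abs_of_pos (inv_pos.2 hδ0), div_eq_inv_mul]
      have e2 : |⟪a l, g⟫| / δ ≤ 4 * 2 ^ I := by
        apply le_of_sq_le_sq _ (by positivity)
        have j1 : (|⟪a l, g⟫| / δ) ^ 2 ≤ 9 * K ^ 2 * L / δ ^ 2 := by
          rw [div_pow]
          gcongr
          calc |⟪a l, g⟫| ^ 2 ≤ (3 * K * √L) ^ 2 := by have := hg2 l; gcongr
            _ = _ := by rw [mul_pow, Real.sq_sqrt (by linarith)]; ring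
        have j2 : (4 * (2:ℝ) ^ I) ^ 2 = 16 * 4 ^ I := by
          rw [mul_pow, ← pow_mul, mul_comm I, pow_mul]; norm_num
        rw [j2]; linarith [show (0:ℝ) ≤ 4 ^ I by positivity]
      rw [e1, min_eq_left e2, div_pow]
      congr 1
      rw [show 4 = 2 * 2 by norm_num, pow_mul, pow_mul, sq_abs]
    simp only [e] at h1
    rw [← Finset.sum_div, ← mul_div_assoc, div_le_iff₀ (by positivity)] at h1
    exact h1
  have hexp : (m:ℝ) * Real.exp (-(4 ^ J / 4)) ≤ 1 := by
    have : Real.exp (-(4 ^ J / 4)) ≤ Real.exp (-L) := Real.exp_le_exp.2 (by linarith)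
    rw [hLm, Real.exp_neg (Real.log m), Real.exp_log hm] at this
    calc (m:ℝ) * Real.exp (-(4 ^ J / 4)) ≤ m * (m:ℝ)⁻¹ := by gcongr
      _ = 1 := mul_inv_cancel₀ hm.ne'
  have key : ∀ u : V, ‖u‖ ≤ 1 → (m:ℝ)⁻¹ * ∑ l, ⟪a l, g⟫ ^ 2 * ⟪a l, u⟫ ^ 2 ≤ 1 / 1000 := by
    intro u hu
    have h1 := h.quartic hm (by linarith) (by linarith) J hJm (by nlinarith) u hu
    have h2 := h J hJm u hu
    have p : ∀ l, ⟪a l, g⟫ ^ 2 * ⟪a l, u⟫ ^ 2 ≤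
        (1 / (2 * δ ^ 2)) * ⟪a l, g⟫ ^ 4 + (δ ^ 2 / 2) * (min |⟪a l, u⟫| (4 * 2 ^ J)) ^ 4 +
        36 * K ^ 2 * L * (max (|⟪a l, u⟫| - 2 * 2 ^ J) 0) ^ 2 := by
      intro l
      have hgl : ⟪a l, g⟫ ^ 2 ≤ 9 * K ^ 2 * L := by
        calc ⟪a l, g⟫ ^ 2 = |⟪a l, g⟫| ^ 2 := (sq_abs _).symm
          _ ≤ (3 * K * √L) ^ 2 := by have := hg2 l; gcongr
          _ = _ := by rw [mul_pow, Real.sq_sqrt (by linarith)]; ring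
      rw [← sq_abs ⟪a l, u⟫]
      generalize |⟪a l, u⟫| = s
      have hr0 : 0 ≤ ⟪a l, g⟫ ^ 2 := sq_nonneg _
      rw [show ⟪a l, g⟫ ^ 4 = (⟪a l, g⟫ ^ 2) ^ 2 by ring]
      generalize ⟪a l, g⟫ ^ 2 = r at *
      by_cases hs : s ≤ 4 * 2 ^ J
      · rw [min_eq_left hs]
        have : 0 ≤ 36 * K ^ 2 * L * (max (s - 2 * 2 ^ J) 0) ^ 2 := by positivity
        have : r * s ^ 2 ≤ (1 / (2 * δ ^ 2)) * r ^ 2 + (δ ^ 2 / 2) * s ^ 4 := by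
          have e : (1 / (2 * δ ^ 2)) * r ^ 2 + (δ ^ 2 / 2) * s ^ 4 - r * s ^ 2 =
            (r / δ - δ * s ^ 2) ^ 2 / 2 := by field_simp; ring
          nlinarith [sq_nonneg (r / δ - δ * s ^ 2)]
        linarith
      · push Not at hs
        have i1 : s / 2 ≤ max (s - 2 * 2 ^ J) 0 := le_max_of_le_left (by linarith)
        have i0 : 0 ≤ s := le_trans (by positivity) hs.le
        have i2 : (s / 2) ^ 2 ≤ (max (s - 2 * 2 ^ J) 0) ^ 2 := by gcongr
        have i3 : r * s ^ 2 ≤ (9 * K ^ 2 * L) * (4 * (max (s - 2 * 2 ^ J) 0) ^ 2) := by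
          have : s ^ 2 ≤ 4 * (max (s - 2 * 2 ^ J) 0) ^ 2 := by linarith
          gcongr
        have : 0 ≤ (1 / (2 * δ ^ 2)) * r ^ 2 := by positivity
        have : 0 ≤ (δ ^ 2 / 2) * (min s (4 * 2 ^ J)) ^ 4 := by positivity
        linarith
    have s1 := Finset.sum_le_sum fun l (_ : l ∈ Finset.univ) => p l
    simp only [Finset.sum_add_distrib, ← Finset.mul_sum] at s1
    have s2 : (m:ℝ)⁻¹ * ∑ l, ⟪a l, g⟫ ^ 2 * ⟪a l, u⟫ ^ 2 ≤
       (1 / (2 * δ ^ 2)) * ((m:ℝ)⁻¹ * ∑ l, ⟪a l, g⟫ ^ 4) +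
       (δ ^ 2 / 2) * ((m:ℝ)⁻¹ * ∑ l, (min |⟪a l, u⟫| (4 * 2 ^ J)) ^ 4) +
        36 * K ^ 2 * (L * (m:ℝ)⁻¹ * ∑ l, (max (|⟪a l, u⟫| - 2 * 2 ^ J) 0) ^ 2) := by
      refine (mul_le_mul_of_nonneg_left s1 (by positivity : 0 ≤ (m:ℝ)⁻¹)).trans (le_of_eq (by ring))
    refine s2.trans (le_trans ?_ hfin)
    have t1 : (1 / (2 * δ ^ 2)) * ((m:ℝ)⁻¹ * ∑ l, ⟪a l, g⟫ ^ 4) ≤ K2 * δ ^ 2 / 2 := by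
      calc _ ≤ (1 / (2 * δ ^ 2)) * (K2 * δ ^ 4) := by gcongr
        _ = _ := by field_simp
    have t2 : (δ ^ 2 / 2) * ((m:ℝ)⁻¹ * ∑ l, (min |⟪a l, u⟫| (4 * 2 ^ J)) ^ 4) ≤ K2 * δ ^ 2 / 2 := by
      calc _ ≤ (δ ^ 2 / 2) * K2 := by gcongr
        _ = _ := by ring
    have t3 : L * (m:ℝ)⁻¹ * ∑ l, (max (|⟪a l, u⟫| - 2 * 2 ^ J) 0) ^ 2 ≤ 2 * K1 * κ := by
      calc _ ≤ L * (m:ℝ)⁻¹ * (K1 * (N + 1)) := by gcongr; exact h2.trans (by gcongr)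
        _ ≤ L * (m:ℝ)⁻¹ * (K1 * (2 * N)) := by gcongr; linarith
        _ = 2 * K1 * ((m:ℝ)⁻¹ * (N * L)) := by ring
        _ ≤ 2 * K1 * ((m:ℝ)⁻¹ * (κ * m)) := by gcongr
        _ = _ := by field_simp
    have t4 : 36 * K ^ 2 * (L * (m:ℝ)⁻¹ * ∑ l, (max (|⟪a l, u⟫| - 2 * 2 ^ J) 0) ^ 2) ≤
      36 * K ^ 2 * (2 * K1 * κ) := by gcongr
    linarith
  intro u
  by_cases hu : ‖u‖ = 0
  · have : u = 0 := norm_eq_zero.1 hu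
    simp [this]
  · have := key (‖u‖⁻¹ • u) (by rw [norm_smul, norm_inv, norm_norm, inv_mul_cancel₀ hu])
    have hp : 0 < ‖u‖ := lt_of_le_of_ne (norm_nonneg _) (Ne.symm hu)
    have e : (m:ℝ)⁻¹ * ∑ l, ⟪a l, g⟫ ^ 2 * ⟪a l, ‖u‖⁻¹ • u⟫ ^ 2 =
      ((m:ℝ)⁻¹ * ∑ l, ⟪a l, g⟫ ^ 2 * ⟪a l, u⟫ ^ 2) / ‖u‖ ^ 2 := by
      rw [mul_div_assoc, Finset.sum_div]
      congr 1
      refine Finset.sum_congr rfl fun l _ => ?_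
      rw [inner_smul_right]; field_simp
    rw [e, div_le_iff₀ (by positivity)] at this
    exact this

end Tail
end WF

namespace WF

section GaussOne

lemma gpdf (x : ℝ) : gaussianPDFReal 0 1 x = (√(2 * Real.pi))⁻¹ * Real.exp (-x ^ 2 / 2) := by
  simp [gaussianPDFReal]

lemma g_exp_integrable : Integrable (fun x : ℝ => Real.exp (x ^ 2 / 4)) (gaussianReal 0 1) := by
  rw [gaussianReal_of_var_ne_zero _ one_ne_zero]
  rw [integrable_withDensity_iff_integrable_smul' (measurable_gaussianPDF _ _)
    (ae_of_all _ fun _ => gaussianPDF_lt_top)]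
  simp only [toReal_gaussianPDF, gpdf, smul_eq_mul]
  have := (integrable_exp_neg_mul_sq (by norm_num : (0:ℝ) < 1 / 4)).const_mul (√(2 * Real.pi))⁻¹
  refine this.congr (ae_of_all _ fun x => ?_)
  simp only [mul_assoc, ← Real.exp_add]
  congr 2; ring

lemma g_exp_integral : ∫ x, Real.exp (x ^ 2 / 4) ∂(gaussianReal 0 1) ≤ 2 := by
  rw [integral_gaussianReal_eq_integral_smul one_ne_zero]
  simp only [gpdf, smul_eq_mul]
  have e : ∀ x : ℝ, (√(2 * Real.pi))⁻¹ * Real.exp (-x ^ 2 / 2) * Real.exp (x ^ 2 / 4) =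
      (√(2 * Real.pi))⁻¹ * Real.exp (-(1 / 4) * x ^ 2) := by
    intro x
    simp only [mul_assoc, ← Real.exp_add]
    congr 2; ring
  simp only [e]
  rw [integral_const_mul, integral_gaussian, inv_mul_le_iff₀ (by positivity)]
  have hp := Real.pi_pos
  apply Real.sqrt_le_iff.2
  constructor
  · positivity
  · rw [mul_pow, Real.sq_sqrt (by positivity)]; linarith

lemma g_pow_integrable (k : ℕ) : Integrable (fun x : ℝ => x ^ k) (gaussianReal 0 1) := by
  have h := memLp_id_gaussianReal (μ := 0) (v := 1) (k : ℝ≥0)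
  by_cases hk : k = 0
  · subst hk; simp
  have := h.integrable_norm_pow (p := k) (by exact_mod_cast hk)
  refine this.mono' (by fun_prop) (ae_of_all _ fun x => ?_)
  simp

lemma g_sq : ∫ x, x ^ 2 ∂(gaussianReal 0 1) = 1 := by
  have h := variance_fun_id_gaussianReal (μ := 0) (v := 1)
  rw [variance_eq_integral (by fun_prop)] at h
  simpa using h

lemma g_four : ∫ x, x ^ 4 ∂(gaussianReal 0 1) = 3 := by
  have h2 := g_sq
  rw [integral_gaussianReal_eq_integral_smul one_ne_zero] at h2 ⊢
  have hi : ∀ k : ℕ, Integrable (fun x : ℝ => x ^ k * Real.exp (-x ^ 2 / 2)) := by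
    intro k
    have h1 := g_pow_integrable k
    rw [gaussianReal_of_var_ne_zero _ one_ne_zero,
     integrable_withDensity_iff_integrable_smul' (measurable_gaussianPDF _ _)
      (ae_of_all _ fun _ => gaussianPDF_lt_top)] at h1
    simp only [toReal_gaussianPDF, gpdf, smul_eq_mul] at h1
    refine (h1.const_mul (√(2 * Real.pi))).congr (ae_of_all _ fun x => ?_)
    have : 0 < √(2 * Real.pi) := by positivity
    field_simp
  have hp := integral_mul_deriv_eq_deriv_mul_of_integrable (u := fun x : ℝ => x ^ 3)
    (u' := fun x => 3 * x ^ 2) (v := fun x => -Real.exp (-x ^ 2 / 2))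
    (v' := fun x => x * Real.exp (-x ^ 2 / 2))
    (fun x _ => by simpa using hasDerivAt_pow 3 x)
    (fun x _ => by
      have h1 : HasDerivAt (fun x : ℝ => -x ^ 2 / 2) (-x) x := by
        have := ((hasDerivAt_pow 2 x).fun_neg).div_const 2
        exact this.congr_deriv (by norm_num; ring)
      exact h1.exp.fun_neg.congr_deriv (by ring))
    ((hi 4).congr (ae_of_all _ fun x => by simp; ring))
    (((hi 2).const_mul (-3)).congr (ae_of_all _ fun x => by simp; ring))
    ((hi 3).neg.congr (ae_of_all _ fun x => by simp))
  simp only [gpdf, smul_eq_mul] at h2 ⊢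
  calc ∫ x : ℝ, (√(2 * Real.pi))⁻¹ * Real.exp (-x ^ 2 / 2) * x ^ 4
      = (√(2 * Real.pi))⁻¹ * ∫ x : ℝ, x ^ 3 * (x * Real.exp (-x ^ 2 / 2)) := by
        rw [← integral_const_mul]; congr 1; ext x; ring
    _ = 3 * ∫ x : ℝ, (√(2 * Real.pi))⁻¹ * Real.exp (-x ^ 2 / 2) * x ^ 2 := by
        rw [hp, ← integral_const_mul, ← integral_neg, ← integral_const_mul]; congr 1; ext x; ring
    _ = 3 := by rw [h2]; norm_num

end GaussOne

section GaussV

variable {V : Type*} [NormedAddCommGroup V] [InnerProductSpace ℝ V] [FiniteDimensional ℝ V]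
  [MeasurableSpace V] [BorelSpace V]

local notation "⟪" x "," y "⟫" => inner ℝ x y

lemma law_inner (u : V) : (stdGaussian V).map (fun a => ⟪a, u⟫) =
    (gaussianReal 0 1).map (fun t => ‖u‖ * t) := by
  have h := IsGaussian.map_eq_gaussianReal (μ := stdGaussian V) (innerSL ℝ u)
  rw [variance_dual_stdGaussian, integral_strongDual_stdGaussian] at h
  rw [gaussianReal_map_const_mul]
  have e : (fun a : V => ⟪a, u⟫) = innerSL ℝ u := by
    ext a; simp [real_inner_comm]
  rw [e, h]
  congr 1
  · simp
  · ext
    simp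

lemma inner_integrable_iff (u : V) (f : ℝ → ℝ) (hf : Measurable f) :
    Integrable (fun a => f ⟪a, u⟫) (stdGaussian V) ↔
      Integrable (fun t => f (‖u‖ * t)) (gaussianReal 0 1) := by
  have h1 := integrable_map_measure (μ := stdGaussian V) (f := fun a : V => ⟪a, u⟫) (g := f)
    hf.aestronglyMeasurable (by fun_prop)
  have h2 := integrable_map_measure (μ := gaussianReal 0 1) (f := fun t => ‖u‖ * t) (g := f)
    hf.aestronglyMeasurable (by fun_prop)
  rw [law_inner] at h1
  exact h1.symm.trans h2

lemma inner_integral (u : V) (f : ℝ → ℝ) (hf : Measurable f) :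
    ∫ a, f ⟪a, u⟫ ∂(stdGaussian V) = ∫ t, f (‖u‖ * t) ∂(gaussianReal 0 1) := by
  rw [← integral_map (φ := fun a : V => ⟪a, u⟫) (by fun_prop) hf.aestronglyMeasurable, law_inner,
    integral_map (by fun_prop) hf.aestronglyMeasurable]

/-- exponential square integrability -/
lemma inner_exp (u : V) (hu : ‖u‖ ≤ 1) : Integrable (fun a => Real.exp (⟪a, u⟫ ^ 2 / 4)) (stdGaussian V) ∧
    ∫ a, Real.exp (⟪a, u⟫ ^ 2 / 4) ∂(stdGaussian V) ≤ 2 := by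
  have hle : ∀ t : ℝ, Real.exp ((‖u‖ * t) ^ 2 / 4) ≤ Real.exp (t ^ 2 / 4) := by
    intro t
    rw [mul_pow]
    have : ‖u‖ ^ 2 ≤ 1 := pow_le_one₀ (norm_nonneg _) hu
    gcongr
    exact mul_le_of_le_one_left (sq_nonneg _) this
  have hi : Integrable (fun t : ℝ => Real.exp ((‖u‖ * t) ^ 2 / 4)) (gaussianReal 0 1) :=
    g_exp_integrable.mono' (by fun_prop) (ae_of_all _ fun t => by
      rw [Real.norm_of_nonneg (Real.exp_pos _).le]; exact hle t)
  refine ⟨(inner_integrable_iff u (fun s => Real.exp (s ^ 2 / 4)) (by fun_prop)).2 hi, ?_⟩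
  rw [inner_integral u (fun s => Real.exp (s ^ 2 / 4)) (by fun_prop)]
  exact (integral_mono hi g_exp_integrable hle).trans g_exp_integral

lemma inner_pow_integrable (u : V) (k : ℕ) : Integrable (fun a => ⟪a, u⟫ ^ k) (stdGaussian V) := by
  refine (inner_integrable_iff u (fun s => s ^ k) (by fun_prop)).2 ?_
  simp only [mul_pow]
  exact (g_pow_integrable k).const_mul _

lemma inner_sq (u : V) : ∫ a, ⟪a, u⟫ ^ 2 ∂(stdGaussian V) = ‖u‖ ^ 2 := by
  rw [inner_integral u (fun s => s ^ 2) (by fun_prop)]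
  simp only [mul_pow]
  rw [integral_const_mul, g_sq, mul_one]

lemma inner_four (u : V) : ∫ a, ⟪a, u⟫ ^ 4 ∂(stdGaussian V) = 3 * ‖u‖ ^ 4 := by
  rw [inner_integral u (fun s => s ^ 4) (by fun_prop)]
  simp only [mul_pow]
  rw [integral_const_mul, g_four, mul_comm]

lemma inner_sq_sq_int (x u : V) : Integrable (fun a => ⟪a, x⟫ ^ 2 * ⟪a, u⟫ ^ 2) (stdGaussian V) := by
  refine ((inner_pow_integrable x 4).add (inner_pow_integrable u 4)).mono' (by fun_prop)
    (ae_of_all _ fun a => ?_)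
  rw [Real.norm_of_nonneg (by positivity)]
  simp only [Pi.add_apply]
  nlinarith [sq_nonneg (⟪a, x⟫ ^ 2 - ⟪a, u⟫ ^ 2), sq_nonneg (⟪a, x⟫ ^ 2), sq_nonneg (⟪a, u⟫ ^ 2)]

lemma inner_sq_sq (x u : V) : ∫ a, ⟪a, x⟫ ^ 2 * ⟪a, u⟫ ^ 2 ∂(stdGaussian V) =
    ‖x‖ ^ 2 * ‖u‖ ^ 2 + 2 * ⟪x, u⟫ ^ 2 := by
  have e : ∀ a : V, ⟪a, x⟫ ^ 2 * ⟪a, u⟫ ^ 2 = (1 / 12) * (⟪a, x + u⟫ ^ 4 + ⟪a, x - u⟫ ^ 4 -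
      2 * ⟪a, x⟫ ^ 4 - 2 * ⟪a, u⟫ ^ 4) := by
    intro a
    rw [inner_add_right, inner_sub_right]; ring
  simp only [e]
  have i := fun w : V => inner_pow_integrable w 4
  have i1 : Integrable (fun a => ⟪a, x + u⟫ ^ 4 + ⟪a, x - u⟫ ^ 4) (stdGaussian V) := (i _).add (i _)
  have i2 : Integrable (fun a => ⟪a, x + u⟫ ^ 4 + ⟪a, x - u⟫ ^ 4 - 2 * ⟪a, x⟫ ^ 4) (stdGaussian V) :=
    i1.sub ((i _).const_mul _)
  rw [integral_const_mul, integral_sub i2 ((i _).const_mul _),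
    integral_sub i1 ((i _).const_mul _), integral_add (i _) (i _),
    integral_const_mul, integral_const_mul, inner_four, inner_four, inner_four, inner_four]
  have h1 := norm_add_sq_real x u
  have h2 := norm_sub_sq_real x u
  have e4 : ∀ w : V, ‖w‖ ^ 4 = (‖w‖ ^ 2) ^ 2 := fun w => by ring
  rw [e4, e4, h1, h2]; ring

lemma inner_tail (u : V) (t : ℝ) (ht : 0 ≤ t) :
    stdGaussian V {a | t * ‖u‖ < |⟪a, u⟫|} ≤ ENNReal.ofReal (2 * Real.exp (-(t ^ 2 / 4))) := by
  by_cases hu : ‖u‖ = 0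
  · have : u = 0 := norm_eq_zero.1 hu
    simp [this]
  have hp : 0 < ‖u‖ := lt_of_le_of_ne (norm_nonneg _) (Ne.symm hu)
  obtain ⟨hi, hb⟩ := inner_exp (‖u‖⁻¹ • u) (by rw [norm_smul, norm_inv, norm_norm, inv_mul_cancel₀ hu])
  have hM := mul_meas_ge_le_integral_of_nonneg (ae_of_all _ fun a => (Real.exp_pos _).le) hi
    (Real.exp (t ^ 2 / 4))
  have hsub : {a | t * ‖u‖ < |⟪a, u⟫|} ⊆
      {a | Real.exp (t ^ 2 / 4) ≤ Real.exp (⟪a, ‖u‖⁻¹ • u⟫ ^ 2 / 4)} := by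
    intro a ha
    simp only [Set.mem_ofPred_eq] at ha ⊢
    apply Real.exp_le_exp.2
    rw [inner_smul_right, ← sq_abs (‖u‖⁻¹ * _), abs_mul, abs_of_pos (inv_pos.2 hp)]
    have : t ≤ ‖u‖⁻¹ * |⟪a, u⟫| := by
      rw [le_inv_mul_iff₀ hp]; linarith
    gcongr
  refine (measure_mono hsub).trans ?_
  rw [ENNReal.le_ofReal_iff_toReal_le (measure_ne_top _ _) (by positivity)]
  rw [Real.exp_neg, ← div_eq_mul_inv, le_div_iff₀ (Real.exp_pos _), mul_comm]
  exact hM.trans hb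

end GaussV
end WF

namespace WF

section Chern

variable {Ω : Type*} [MeasurableSpace Ω] (P : Measure Ω) [IsProbabilityMeasure P] {m : ℕ}

lemma chernoff (f : Ω → ℝ) (hf : Measurable f) (q τ : ℝ)
    (h : ∫⁻ ω, ENNReal.ofReal (Real.exp (f ω)) ∂P ≤ ENNReal.ofReal (Real.exp q)) :
    Measure.pi (fun _ : Fin m => P) {a | τ < ∑ l, f (a l)} ≤
      ENNReal.ofReal (Real.exp (m * q - τ)) := by
  have h1 : ∫⁻ a, ∏ l, ENNReal.ofReal (Real.exp (f (a l))) ∂(Measure.pi (fun _ : Fin m => P)) =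
      (∫⁻ ω, ENNReal.ofReal (Real.exp (f ω)) ∂P) ^ m := by
    have hmeas : Measurable fun ω => ENNReal.ofReal (Real.exp (f ω)) := by fun_prop
    have hind := iIndepFun_pi (μ := fun _ : Fin m => P)
      (X := fun _ ω => ENNReal.ofReal (Real.exp (f ω))) (fun _ => hmeas.aemeasurable)
    rw [lintegral_prod_eq_prod_lintegral_of_indepFun Finset.univ _ hind
      (fun i => hmeas.comp (measurable_pi_apply i))]
    rw [Finset.prod_congr rfl fun i _ => ?_, Finset.prod_const, Finset.card_univ, Fintype.card_fin]
    exact (measurePreserving_eval (fun _ : Fin m => P) i).lintegral_comp hmeas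
  have h2 : ∫⁻ a, ENNReal.ofReal (Real.exp (∑ l, f (a l))) ∂(Measure.pi (fun _ : Fin m => P)) ≤
      ENNReal.ofReal (Real.exp (m * q)) := by
    have e : ∀ a : Fin m → Ω, ENNReal.ofReal (Real.exp (∑ l, f (a l))) =
        ∏ l, ENNReal.ofReal (Real.exp (f (a l))) := by
      intro a
      rw [Real.exp_sum, ENNReal.ofReal_prod_of_nonneg (fun _ _ => (Real.exp_pos _).le)]
    simp only [e, h1]
    refine (pow_le_pow_left' h m).trans (le_of_eq ?_)
    rw [← ENNReal.ofReal_pow (Real.exp_pos _).le, ← Real.exp_nat_mul]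
  have h3 := meas_ge_le_lintegral_div (μ := Measure.pi (fun _ : Fin m => P))
    (f := fun a => ENNReal.ofReal (Real.exp (∑ l, f (a l)))) (by
      refine Measurable.aemeasurable ?_
      fun_prop)
    (ε := ENNReal.ofReal (Real.exp τ)) (by simp [Real.exp_pos]) (by simp)
  have hsub : {a : Fin m → Ω | τ < ∑ l, f (a l)} ⊆
      {a | ENNReal.ofReal (Real.exp τ) ≤ ENNReal.ofReal (Real.exp (∑ l, f (a l)))} := by
    intro a ha
    exact ENNReal.ofReal_le_ofReal (Real.exp_le_exp.2 (le_of_lt ha))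
  refine (measure_mono hsub).trans (h3.trans ?_)
  rw [Real.exp_sub, ENNReal.ofReal_div_of_pos (Real.exp_pos _)]
  gcongr

lemma exp_quad (y : ℝ) : Real.exp y ≤ 1 + y + y ^ 2 * Real.exp |y| := by
  by_cases hy : |y| ≤ 1
  · have h := abs_le.1 (Real.abs_exp_sub_one_sub_id_le hy)
    have : y ^ 2 ≤ y ^ 2 * Real.exp |y| :=
      le_mul_of_one_le_right (sq_nonneg _) (Real.one_le_exp (abs_nonneg _))
    linarith [h.2]
  · push Not at hy
    rcases le_or_gt 0 y with h0 | h0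
    · rw [abs_of_nonneg h0] at *
      have := Real.exp_pos y
      have : Real.exp y ≤ y ^ 2 * Real.exp y :=
        le_mul_of_one_le_left this.le (one_le_pow₀ hy.le)
      linarith
    · rw [abs_of_neg h0] at *
      have h1 : Real.exp y ≤ 1 := Real.exp_le_one_iff.2 h0.le
      have h2 : 1 + (-y) ≤ Real.exp (-y) := by linarith [Real.add_one_le_exp (-y)]
      nlinarith

lemma bernstein (X : Ω → ℝ) (hX : Measurable X) (lam M e τ : ℝ) (hl : 0 ≤ lam)
    (hi : Integrable X P) (he : ∫ ω, X ω ∂P = e)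
    (hi2 : Integrable (fun ω => X ω ^ 2 * Real.exp |lam * X ω|) P)
    (hM : ∫ ω, X ω ^ 2 * Real.exp |lam * X ω| ∂P ≤ M) :
    Measure.pi (fun _ : Fin m => P) {a | m * τ < ∑ l, (X (a l) - e)} ≤
      ENNReal.ofReal (Real.exp (m * (lam ^ 2 * M) - lam * (m * τ))) := by
  have hle : ∀ ω, Real.exp (lam * (X ω - e)) ≤
      Real.exp (-(lam * e)) * (1 + lam * X ω + lam ^ 2 * (X ω ^ 2 * Real.exp |lam * X ω|)) := by
    intro ω
    have := exp_quad (lam * X ω)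
    rw [show lam * (X ω - e) = -(lam * e) + lam * X ω by ring, Real.exp_add]
    have := Real.exp_pos (-(lam * e))
    gcongr
    linarith
  have i0 : Integrable (fun ω => 1 + lam * X ω) P := (integrable_const 1).add (hi.const_mul lam)
  have i1 : Integrable (fun ω => 1 + lam * X ω + lam ^ 2 * (X ω ^ 2 * Real.exp |lam * X ω|)) P :=
    i0.add (hi2.const_mul _)
  have i3 : Integrable (fun ω => Real.exp (lam * (X ω - e))) P := by
    refine (i1.const_mul (Real.exp (-(lam * e)))).mono' (by fun_prop) (ae_of_all _ fun ω => ?_)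
    rw [Real.norm_of_nonneg (Real.exp_pos _).le]; exact hle ω
  have hI : ∫ ω, Real.exp (lam * (X ω - e)) ∂P ≤ Real.exp (lam ^ 2 * M) := by
    refine (integral_mono i3 (i1.const_mul _) hle).trans ?_
    rw [integral_const_mul, integral_add i0 (hi2.const_mul _), integral_add (integrable_const 1)
      (hi.const_mul lam), integral_const_mul, integral_const_mul, he]
    simp only [integral_const, probReal_univ, smul_eq_mul, mul_one]
    have h1 : 1 + lam * e + lam ^ 2 * ∫ ω, X ω ^ 2 * Real.exp |lam * X ω| ∂P ≤
        Real.exp (lam * e + lam ^ 2 * M) := by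
      have := Real.add_one_le_exp (lam * e + lam ^ 2 * M)
      have : lam ^ 2 * ∫ ω, X ω ^ 2 * Real.exp |lam * X ω| ∂P ≤ lam ^ 2 * M := by gcongr
      linarith
    calc _ ≤ Real.exp (-(lam * e)) * Real.exp (lam * e + lam ^ 2 * M) := by gcongr
      _ = _ := by rw [← Real.exp_add]; congr 1; ring
  have hc := chernoff (m := m) P (fun ω => lam * (X ω - e)) (by fun_prop) (lam ^ 2 * M)
    (lam * (m * τ)) (by
      rw [← ofReal_integral_eq_lintegral_ofReal i3 (ae_of_all _ fun ω => (Real.exp_pos _).le)]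
      exact ENNReal.ofReal_le_ofReal hI)
  rcases eq_or_lt_of_le hl with h0 | h0
  · subst h0
    simp
    exact prob_le_one
  · refine le_trans (measure_mono ?_) hc
    intro a ha
    simp only [Set.mem_ofPred_eq] at ha ⊢
    rw [← Finset.mul_sum]
    gcongr

lemma bernstein2 (X : Ω → ℝ) (hX : Measurable X) (lam M e τ : ℝ) (hl : 0 ≤ lam)
    (hi : Integrable X P) (he : ∫ ω, X ω ∂P = e)
    (hi2 : Integrable (fun ω => X ω ^ 2 * Real.exp |lam * X ω|) P)
    (hM : ∫ ω, X ω ^ 2 * Real.exp |lam * X ω| ∂P ≤ M) (hm : 0 < (m:ℝ)) :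
    Measure.pi (fun _ : Fin m => P) {a | τ < |(m:ℝ)⁻¹ * ∑ l, X (a l) - e|} ≤
      2 * ENNReal.ofReal (Real.exp (m * (lam ^ 2 * M) - lam * (m * τ))) := by
  have h1 := bernstein (m := m) P X hX lam M e τ hl hi he hi2 hM
  have h2 := bernstein (m := m) P (fun ω => - X ω) hX.neg lam M (-e) τ hl hi.neg
    (by rw [integral_neg, he]) (by simpa using hi2) (by simpa using hM)
  have hsub : {a : Fin m → Ω | τ < |(m:ℝ)⁻¹ * ∑ l, X (a l) - e|} ⊆
    {a | m * τ < ∑ l, (X (a l) - e)} ∪ {a | m * τ < ∑ l, (- X (a l) - -e)} := by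
    intro a ha
    simp only [Set.mem_ofPred_eq, Set.mem_union] at ha ⊢
    simp only [Finset.sum_sub_distrib, Finset.sum_const, Finset.card_univ, Fintype.card_fin,
      nsmul_eq_mul, Finset.sum_neg_distrib]
    rcases lt_abs.1 ha with h | h
    · left
      have : m * τ < m * ((m:ℝ)⁻¹ * ∑ l, X (a l) - e) := by gcongr
      rw [mul_sub, mul_inv_cancel_left₀ hm.ne'] at this
      exact this
    · right
      have : m * τ < m * -((m:ℝ)⁻¹ * ∑ l, X (a l) - e) := by gcongr
      rw [mul_neg, mul_sub, mul_inv_cancel_left₀ hm.ne'] at this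
      linarith
  refine (measure_mono hsub).trans ((measure_union_le _ _).trans ?_)
  rw [two_mul]
  exact add_le_add h1 h2

lemma mp_update (l : Fin m) : MeasurePreserving (fun p : (Fin m → Ω) × Ω => Function.update p.1 l p.2)
    ((Measure.pi (fun _ : Fin m => P)).prod P) (Measure.pi (fun _ : Fin m => P)) := by
  have hm : Measurable (fun p : (Fin m → Ω) × Ω => Function.update p.1 l p.2) := by
    refine measurable_pi_lambda _ fun i => ?_
    by_cases h : i = l
    · subst h; simpa using measurable_snd
    · simp only [Function.update_of_ne h]; fun_prop
  refine ⟨hm, ?_⟩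
  symm
  refine Measure.pi_eq fun s hs => ?_
  rw [Measure.map_apply hm (MeasurableSet.univ_pi hs)]
  have e : (fun p : (Fin m → Ω) × Ω => Function.update p.1 l p.2) ⁻¹' (Set.univ.pi s) =
      (Set.univ.pi (Function.update s l Set.univ)) ×ˢ (s l) := by
    ext p
    simp only [Set.mem_preimage, Set.mem_pi, Set.mem_univ, forall_true_left, Set.mem_prod]
    constructor
    · intro h
      refine ⟨fun i => ?_, by simpa using h l⟩
      by_cases hi : i = l
      · subst hi; simp
      · have := h i
        simpa [Function.update_of_ne hi] using this
    · rintro ⟨h1, h2⟩ i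
      by_cases hi : i = l
      · subst hi; simpa using h2
      · have := h1 i
        simpa [Function.update_of_ne hi] using this
  rw [e, Measure.prod_prod, Measure.pi_pi]
  rw [← Finset.mul_prod_erase Finset.univ _ (Finset.mem_univ l),
    ← Finset.mul_prod_erase Finset.univ (fun i => P (s i)) (Finset.mem_univ l)]
  simp only [Function.update_self, measure_univ, one_mul]
  rw [mul_comm]
  congr 1
  refine Finset.prod_congr rfl fun i hi => ?_
  rw [Function.update_of_ne (Finset.ne_of_mem_erase hi)]

end Chern

section Loo

variable {V : Type*} [NormedAddCommGroup V] [InnerProductSpace ℝ V] [FiniteDimensional ℝ V]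
  [MeasurableSpace V] [BorelSpace V] {m : ℕ}

local notation "⟪" x "," y "⟫" => inner ℝ x y

lemma loo (l : Fin m) (F : (Fin m → V) → V) (hF : Measurable F) (t : ℝ) (ht : 0 ≤ t) :
    Measure.pi (fun _ : Fin m => stdGaussian V)
      {a | t * ‖F (Function.update a l 0)‖ < |⟪a l, F (Function.update a l 0)⟫|} ≤
      ENNReal.ofReal (2 * Real.exp (-(t ^ 2 / 4))) := by
  have hu : Measurable (fun a : Fin m → V => Function.update a l 0) := by fun_prop
  have hG : Measurable (fun a : Fin m → V => F (Function.update a l 0)) := hF.comp hu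
  have hms : MeasurableSet {a : Fin m → V | t * ‖F (Function.update a l 0)‖ <
      |⟪a l, F (Function.update a l 0)⟫|} := by
    apply measurableSet_lt
    · fun_prop
    · exact (Measurable.inner (𝕜 := ℝ) (measurable_pi_apply l) hG).norm
  have mp := mp_update (stdGaussian V) l
  rw [← mp.measure_preimage hms.nullMeasurableSet, Measure.prod_apply (mp.measurable hms)]
  have hb : ∀ a : Fin m → V, stdGaussian V (Prod.mk a ⁻¹'
      ((fun p : (Fin m → V) × V => Function.update p.1 l p.2) ⁻¹' {a : Fin m → V |
        t * ‖F (Function.update a l 0)‖ < |⟪a l, F (Function.update a l 0)⟫|})) ≤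
      ENNReal.ofReal (2 * Real.exp (-(t ^ 2 / 4))) := by
    intro a
    refine le_trans (le_of_eq ?_) (inner_tail (F (Function.update a l 0)) t ht)
    congr 1
    ext b
    simp
  refine (lintegral_mono hb).trans ?_
  simp

end Loo

section Net

variable (V : Type*) [NormedAddCommGroup V] [InnerProductSpace ℝ V] [FiniteDimensional ℝ V]

lemma exists_net : ∃ s : Finset V, s.card ≤ 5 ^ (Module.finrank ℝ V) ∧ (∀ v ∈ s, ‖v‖ ≤ 1) ∧
    ∀ u : V, ‖u‖ ≤ 1 → ∃ v ∈ s, ∃ w : V, ‖w‖ ≤ 1 ∧ u = v + (1 / 2 : ℝ) • w := by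
  classical
  -- maximal separated set
  let Sep : Finset V → Prop := fun s => (∀ v ∈ s, ‖v‖ ≤ 1) ∧ ∀ c ∈ s, ∀ d ∈ s, c ≠ d → 1 / 2 ≤ ‖c - d‖
  have hcard : ∀ s, Sep s → s.card ≤ 5 ^ (Module.finrank ℝ V) := by
    intro s hs
    have hinj : Function.Injective (fun v : V => (2:ℝ) • v) := smul_right_injective V (by norm_num)
    rw [← Finset.card_image_of_injective s hinj]
    apply Besicovitch.card_le_of_separated
    · intro c hc
      obtain ⟨v, hv, rfl⟩ := Finset.mem_image.1 hc
      have := hs.1 v hv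
      simp only [norm_smul]; norm_num; linarith
    · intro c hc d hd hcd
      obtain ⟨v, hv, rfl⟩ := Finset.mem_image.1 hc
      obtain ⟨w, hw, rfl⟩ := Finset.mem_image.1 hd
      have := hs.2 v hv w hw (fun h => hcd (by rw [h]))
      rw [← smul_sub, norm_smul]; norm_num; linarith
  have hex : ∃ k, ∃ s, Sep s ∧ s.card = k := ⟨0, ∅, by simp [Sep], by simp⟩
  have hb : ∀ k, (∃ s, Sep s ∧ s.card = k) → k ≤ 5 ^ (Module.finrank ℝ V) := by
    rintro k ⟨s, hs, rfl⟩; exact hcard s hs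
  obtain ⟨s, hs, hsk⟩ := Nat.findGreatest_spec (P := fun k => ∃ s, Sep s ∧ s.card = k)
    (m := 0) (n := 5 ^ (Module.finrank ℝ V)) (by positivity) ⟨∅, by simp [Sep], by simp⟩
  refine ⟨s, hcard s hs, hs.1, fun u hu => ?_⟩
  by_contra hcon
  push Not at hcon
  have hfar : ∀ v ∈ s, 1 / 2 ≤ ‖u - v‖ := by
    intro v hv
    by_contra hlt
    push Not at hlt
    refine hcon v hv ((2:ℝ) • (u - v)) (by rw [norm_smul]; norm_num; linarith) ?_
    rw [smul_smul]; norm_num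
  have hnot : u ∉ s := fun h => by have := hfar u h; norm_num at this
  have hs' : Sep (insert u s) := by
    refine ⟨?_, ?_⟩
    · intro v hv
      rcases Finset.mem_insert.1 hv with rfl | h
      · exact hu
      · exact hs.1 v h
    · intro c hc d hd hcd
      rcases Finset.mem_insert.1 hc with rfl | h1 <;> rcases Finset.mem_insert.1 hd with rfl | h2
      · exact absurd rfl hcd
      · exact hfar d h2
      · rw [norm_sub_rev]; exact hfar c h1
      · exact hs.2 c h1 d h2 hcd
  have hle := Nat.le_findGreatest (P := fun k => ∃ s, Sep s ∧ s.card = k)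
    (hb _ ⟨_, hs', rfl⟩) ⟨_, hs', rfl⟩
  rw [← hsk, Finset.card_insert_of_notMem hnot] at hle
  omega

end Net
end WF

namespace WF

section Prob

variable {V : Type*} [NormedAddCommGroup V] [InnerProductSpace ℝ V] [FiniteDimensional ℝ V]
  [MeasurableSpace V] [BorelSpace V] {m : ℕ}

local notation "⟪" x "," y "⟫" => inner ℝ x y

variable (V m) in
/-- law of the sample -/
def PV : Measure (Fin m → V) := Measure.pi (fun _ : Fin m => stdGaussian V)

instance : IsProbabilityMeasure (PV V m) := by unfold PV; infer_instance

lemma tail_one (v : V) (hv : ‖v‖ ≤ 1) (t s : ℝ) (ht : 0 ≤ t) :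
    PV V m {a | 4 * (2 * (m * Real.exp (-(t ^ 2 / 4))) + s) < ∑ l, (max (|⟪a l, v⟫| - t) 0) ^ 2} ≤
      ENNReal.ofReal (Real.exp (-s)) := by
  obtain ⟨hi, hb⟩ := inner_exp v hv
  have hle : ∀ a : V, Real.exp ((1 / 4) * (max (|⟪a, v⟫| - t) 0) ^ 2) ≤
      1 + Real.exp (-(t ^ 2 / 4)) * Real.exp (⟪a, v⟫ ^ 2 / 4) := by
    intro a
    rw [← Real.exp_add]
    rcases le_or_gt |⟪a, v⟫| t with h | h
    · rw [max_eq_right (by linarith)]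
      simp [Real.exp_pos, le_of_lt]
    · rw [max_eq_left (by linarith)]
      have : Real.exp ((1 / 4) * (|⟪a, v⟫| - t) ^ 2) ≤
          Real.exp (-(t ^ 2 / 4) + ⟪a, v⟫ ^ 2 / 4) := by
        apply Real.exp_le_exp.2
        rw [← sq_abs ⟪a, v⟫]
        nlinarith
      linarith
  have i1 : Integrable (fun a => 1 + Real.exp (-(t ^ 2 / 4)) * Real.exp (⟪a, v⟫ ^ 2 / 4))
      (stdGaussian V) := (integrable_const 1).add (hi.const_mul _)
  have i3 : Integrable (fun a => Real.exp ((1 / 4) * (max (|⟪a, v⟫| - t) 0) ^ 2)) (stdGaussian V) := by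
    refine i1.mono' (by fun_prop) (ae_of_all _ fun ω => ?_)
    rw [Real.norm_of_nonneg (Real.exp_pos _).le]; exact hle ω
  have hI : ∫ a, Real.exp ((1 / 4) * (max (|⟪a, v⟫| - t) 0) ^ 2) ∂(stdGaussian V) ≤
      Real.exp (2 * Real.exp (-(t ^ 2 / 4))) := by
    refine (integral_mono i3 i1 hle).trans ?_
    rw [integral_add (integrable_const 1) (hi.const_mul _), integral_const_mul]
    simp only [integral_const, probReal_univ, smul_eq_mul, mul_one]
    have := Real.add_one_le_exp (2 * Real.exp (-(t ^ 2 / 4)))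
    have := mul_le_mul_of_nonneg_left hb (Real.exp_pos (-(t ^ 2 / 4))).le
    linarith
  have hc := chernoff (m := m) (stdGaussian V) (fun a => (1 / 4) * (max (|⟪a, v⟫| - t) 0) ^ 2)
    (by fun_prop) (2 * Real.exp (-(t ^ 2 / 4))) (2 * (m * Real.exp (-(t ^ 2 / 4))) + s) (by
      rw [← ofReal_integral_eq_lintegral_ofReal i3 (ae_of_all _ fun ω => (Real.exp_pos _).le)]
      exact ENNReal.ofReal_le_ofReal hI)
  unfold PV
  refine le_trans (measure_mono ?_) (hc.trans (le_of_eq ?_))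
  · intro a ha
    simp only [Set.mem_ofPred_eq] at ha ⊢
    rw [← Finset.mul_sum]; linarith
  · congr 2; ring

lemma tail_net (a : Fin m → V) (s : Finset V) (t τ : ℝ) (hs : ∀ u : V, ‖u‖ ≤ 1 → ∃ v ∈ s, ∃ w : V,
    ‖w‖ ≤ 1 ∧ u = v + (1 / 2 : ℝ) • w)
    (h : ∀ v ∈ s, ∑ l, (max (|⟪a l, v⟫| - t) 0) ^ 2 ≤ τ) (u : V) (hu : ‖u‖ ≤ 1) :
    ∑ l, (max (|⟪a l, u⟫| - 2 * t) 0) ^ 2 ≤ 4 * τ := by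
  have hc : Continuous (fun u : V => ∑ l, (max (|⟪a l, u⟫| - 2 * t) 0) ^ 2) := by fun_prop
  obtain ⟨z, hz, hmax⟩ := (isCompact_closedBall (0:V) 1).exists_isMaxOn ⟨0, by simp⟩ hc.continuousOn
  have hz1 : ‖z‖ ≤ 1 := by simpa using hz
  obtain ⟨v, hv, w, hw, e⟩ := hs z hz1
  have hw2 := hmax (show w ∈ Metric.closedBall (0:V) 1 by simpa using hw)
  have hu2 := hmax (show u ∈ Metric.closedBall (0:V) 1 by simpa using hu)
  simp only [Set.mem_ofPred_eq] at hw2 hu2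
  have h1 : ∑ l, (max (|⟪a l, z⟫| - 2 * t) 0) ^ 2 ≤ ∑ l, (2 * (max (|⟪a l, v⟫| - t) 0) ^ 2 +
      (1 / 2) * (max (|⟪a l, w⟫| - 2 * t) 0) ^ 2) := by
    refine Finset.sum_le_sum fun l _ => ?_
    have i1 : max (|⟪a l, z⟫| - 2 * t) 0 ≤ max (|⟪a l, v⟫| - t) 0 + (1 / 2) * max (|⟪a l, w⟫| - 2 * t) 0 := by
      apply max_le _ (by positivity)
      have : |⟪a l, z⟫| ≤ |⟪a l, v⟫| + (1 / 2) * |⟪a l, w⟫| := by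
        rw [e, inner_add_right, inner_smul_right]
        refine (abs_add_le _ _).trans ?_
        rw [abs_mul]; norm_num
      linarith [le_max_left (|⟪a l, v⟫| - t) 0, le_max_left (|⟪a l, w⟫| - 2 * t) 0]
    have i0 : 0 ≤ max (|⟪a l, z⟫| - 2 * t) 0 := le_max_right _ _
    generalize max (|⟪a l, z⟫| - 2 * t) 0 = A at *
    generalize max (|⟪a l, v⟫| - t) 0 = B at *
    generalize max (|⟪a l, w⟫| - 2 * t) 0 = C at *
    have : A ^ 2 ≤ (B + 1 / 2 * C) ^ 2 := by gcongr
    nlinarith [sq_nonneg (B - 1 / 2 * C)]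
  rw [Finset.sum_add_distrib, ← Finset.mul_sum, ← Finset.mul_sum] at h1
  have := h v hv
  linarith

lemma sum_bound {ι : Type*} {Ω : Type*} [MeasurableSpace Ω] (P : Measure Ω) (s : Finset ι) (E : ι → Set Ω)
    (b c : ℝ) (hb : 0 ≤ b) (h : ∀ i ∈ s, P (E i) ≤ ENNReal.ofReal b) (hc : s.card * b ≤ c) :
    P (⋃ i ∈ s, E i) ≤ ENNReal.ofReal c := by
  refine (measure_biUnion_finset_le s E).trans ((Finset.sum_le_sum h).trans ?_)
  rw [Finset.sum_const, nsmul_eq_mul, ← ENNReal.ofReal_natCast, ← ENNReal.ofReal_mul (by positivity)]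
  exact ENNReal.ofReal_le_ofReal hc

lemma five_pow_le (n : ℕ) : ((5 ^ n : ℕ) : ℝ) ≤ Real.exp (2 * n) := by
  rw [mul_comm, Real.exp_nat_mul]
  push_cast
  gcongr
  have := Real.quadratic_le_exp_of_nonneg (x := 2) (by norm_num)
  linarith

lemma tb_prob (hm : 1 ≤ m) :
    PV V m {a | ¬ TB a 48 (Module.finrank ℝ V + Real.log m)} ≤ ENNReal.ofReal (2 / m) := by
  classical
  obtain ⟨s, hs1, hs2, hs3⟩ := exists_net V
  set n := Module.finrank ℝ V with hn
  have hm' : (1:ℝ) ≤ m := by exact_mod_cast hm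
  have hL : 0 ≤ Real.log m := Real.log_nonneg hm'
  set σ := 2 * (n:ℝ) + 3 * Real.log m with hσ
  let E : ℕ × V → Set (Fin m → V) := fun p =>
    {a | 4 * (2 * (m * Real.exp (-(((2:ℝ) ^ p.1) ^ 2 / 4))) + σ) <
      ∑ l, (max (|⟪a l, p.2⟫| - 2 ^ p.1) 0) ^ 2}
  have hsub : {a : Fin m → V | ¬ TB a 48 (n + Real.log m)} ⊆
      ⋃ p ∈ Finset.range (m + 1) ×ˢ s, E p := by
    intro a ha
    by_contra hcon
    simp only [Set.mem_iUnion, not_exists] at hcon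
    apply ha
    intro i hi u hu
    have h1 : ∀ v ∈ s, ∑ l, (max (|⟪a l, v⟫| - 2 ^ i) 0) ^ 2 ≤
        4 * (2 * (m * Real.exp (-(((2:ℝ) ^ i) ^ 2 / 4))) + σ) := by
      intro v hv
      have := hcon (i, v) (by simp [hv]; omega)
      simpa [E] using this
    refine (tail_net a s _ _ hs3 h1 u hu).trans ?_
    have e : ((2:ℝ) ^ i) ^ 2 = 4 ^ i := by rw [← pow_mul, mul_comm, pow_mul]; norm_num
    rw [e, hσ]
    have : 0 ≤ (m:ℝ) * Real.exp (-(4 ^ i / 4)) := by positivity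
    have : (0:ℝ) ≤ n := by positivity
    linarith
  refine (measure_mono hsub).trans ?_
  refine sum_bound _ _ E (Real.exp (-σ)) _ (Real.exp_pos _).le ?_ ?_
  · rintro ⟨i, v⟩ hp
    simp only [Finset.mem_product] at hp
    exact tail_one v (hs2 v hp.2) _ _ (by positivity)
  · rw [Finset.card_product, Finset.card_range]
    have h5 : (s.card : ℝ) ≤ Real.exp (2 * n) := le_trans (by exact_mod_cast hs1) (five_pow_le n)
    push_cast
    have e1 : Real.exp (-σ) = Real.exp (-(2 * n)) * ((m:ℝ)⁻¹) ^ 3 := by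
      rw [hσ, neg_add, Real.exp_add]
      congr 1
      rw [Real.exp_neg, show (3:ℝ) * Real.log m = (3:ℕ) * Real.log m by norm_num, Real.exp_nat_mul,
        Real.exp_log (by linarith), inv_pow]
    rw [e1]
    calc ((m:ℝ) + 1) * s.card * (Real.exp (-(2 * n)) * ((m:ℝ)⁻¹) ^ 3)
        ≤ (m + m) * Real.exp (2 * n) * (Real.exp (-(2 * n)) * ((m:ℝ)⁻¹) ^ 3) := by gcongr
      _ = (m + m) * ((m:ℝ)⁻¹) ^ 3 := by rw [Real.exp_neg]; field_simp
      _ = 2 * (m:ℝ)⁻¹ * (m:ℝ)⁻¹ := by field_simp; ring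
      _ ≤ 2 * (m:ℝ)⁻¹ * 1 := by gcongr; exact inv_le_one_of_one_le₀ hm'
      _ = 2 / m := by ring

end Prob
end WF

namespace WF

section ProbI

variable {V : Type*} [NormedAddCommGroup V] [InnerProductSpace ℝ V] [FiniteDimensional ℝ V]
  {m : ℕ}

local notation "⟪" x "," y "⟫" => inner ℝ x y

/-- centred quadratic form -/
def qf (a : Fin m → V) (x u : V) : ℝ :=
  (m : ℝ)⁻¹ * ∑ l, ⟪a l, x⟫ ^ 2 * ⟪a l, u⟫ ^ 2 - (‖u‖ ^ 2 + 2 * ⟪x, u⟫ ^ 2)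

lemma qf_smul (a : Fin m → V) (x u : V) (c : ℝ) : qf a x (c • u) = c ^ 2 * qf a x u := by
  unfold qf
  simp only [inner_smul_right, norm_smul, mul_pow, Real.norm_eq_abs, sq_abs]
  have : ∑ l, ⟪a l, x⟫ ^ 2 * (c ^ 2 * ⟪a l, u⟫ ^ 2) = c ^ 2 * ∑ l, ⟪a l, x⟫ ^ 2 * ⟪a l, u⟫ ^ 2 := by
    rw [Finset.mul_sum]
    exact Finset.sum_congr rfl fun l _ => by ring
  rw [this]; ring

lemma qf_polar (a : Fin m → V) (x p w : V) : qf a x (p + (1 / 4 : ℝ) • w) =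
    qf a x p + (1 / 8) * (qf a x (p + w) - qf a x (p - w)) + (1 / 16) * qf a x w := by
  have h1 : ∑ l, ⟪a l, x⟫ ^ 2 * ⟪a l, p + (1 / 4 : ℝ) • w⟫ ^ 2 =
      ∑ l, ⟪a l, x⟫ ^ 2 * ⟪a l, p⟫ ^ 2 + (1 / 8) * (∑ l, ⟪a l, x⟫ ^ 2 * ⟪a l, p + w⟫ ^ 2 -
        ∑ l, ⟪a l, x⟫ ^ 2 * ⟪a l, p - w⟫ ^ 2) + (1 / 16) * ∑ l, ⟪a l, x⟫ ^ 2 * ⟪a l, w⟫ ^ 2 := by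
    rw [← Finset.sum_sub_distrib, Finset.mul_sum, Finset.mul_sum, ← Finset.sum_add_distrib,
      ← Finset.sum_add_distrib]
    refine Finset.sum_congr rfl fun l _ => ?_
    simp only [inner_add_right, inner_sub_right, inner_smul_right]
    ring
  unfold qf
  rw [h1, norm_add_sq_real, norm_add_sq_real, norm_sub_sq_real, norm_smul]
  simp only [inner_add_right, inner_sub_right, inner_smul_right]
  norm_num
  ring

lemma qb_net (a : Fin m → V) (x : V) (s : Finset V) (τ : ℝ) (hs2 : ∀ v ∈ s, ‖v‖ ≤ 1)
    (hs : ∀ u : V, ‖u‖ ≤ 1 → ∃ v ∈ s, ∃ w : V, ‖w‖ ≤ 1 ∧ u = v + (1 / 2 : ℝ) • w)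
    (h : ∀ v ∈ s, ∀ v' ∈ s, |qf a x (v + (1 / 2 : ℝ) • v')| ≤ τ) : QB a x (8 * τ) := by
  have hc : Continuous (fun u : V => |qf a x u|) := by unfold qf; fun_prop
  obtain ⟨z, hz, hmax⟩ := (isCompact_closedBall (0:V) 1).exists_isMaxOn ⟨0, by simp⟩ hc.continuousOn
  have hz1 : ‖z‖ ≤ 1 := by simpa using hz
  have hm1 : ∀ u : V, ‖u‖ ≤ 1 → |qf a x u| ≤ |qf a x z| := fun u hu =>
    hmax (show u ∈ Metric.closedBall (0:V) 1 by simpa using hu)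
  have hom : ∀ S : ℝ, (∀ u : V, ‖u‖ ≤ 1 → |qf a x u| ≤ S) → ∀ u : V, |qf a x u| ≤ S * ‖u‖ ^ 2 := by
    intro S hS u
    by_cases hu : ‖u‖ = 0
    · have : u = 0 := norm_eq_zero.1 hu
      subst this
      simp [qf]
    have h1 := hS (‖u‖⁻¹ • u) (by rw [norm_smul, norm_inv, norm_norm, inv_mul_cancel₀ hu])
    have h2 : u = ‖u‖ • (‖u‖⁻¹ • u) := by rw [smul_smul, mul_inv_cancel₀ hu, one_smul]
    have h3 : |qf a x u| = ‖u‖ ^ 2 * |qf a x (‖u‖⁻¹ • u)| := by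
      conv_lhs => rw [h2, qf_smul]
      rw [abs_mul, abs_of_nonneg (sq_nonneg _)]
    rw [h3, mul_comm S]
    gcongr
  set S := |qf a x z| with hS
  have hq := hom S hm1
  have hfin : S ≤ 8 * τ := by
    obtain ⟨v, hv, w, hw, e⟩ := hs z hz1
    obtain ⟨v', hv', w', hw', e'⟩ := hs w hw
    have e2 : z = (v + (1 / 2 : ℝ) • v') + (1 / 4 : ℝ) • w' := by
      rw [e, e', smul_add, smul_smul, add_assoc]; norm_num
    have h1 := h v hv v' hv'
    set p := v + (1 / 2 : ℝ) • v' with hp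
    have hpn : ‖p‖ ≤ 3 / 2 := by
      refine (norm_add_le _ _).trans ?_
      rw [norm_smul]
      have := hs2 v hv
      have := hs2 v' hv'
      norm_num
      linarith
    have h2 := qf_polar a x p w'
    rw [← e2] at h2
    have h3 := hq (p + w')
    have h4 := hq (p - w')
    have h5 := hm1 w' hw'
    have h6 : S * ‖p + w'‖ ^ 2 + S * ‖p - w'‖ ^ 2 ≤ S * (13 / 2) := by
      rw [← mul_add]
      have h0 : 0 ≤ S := abs_nonneg _
      gcongr
      rw [norm_add_sq_real, norm_sub_sq_real]
      nlinarith [norm_nonneg p, norm_nonneg w']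
    have h7 : S ≤ τ + (1 / 8) * (S * ‖p + w'‖ ^ 2 + S * ‖p - w'‖ ^ 2) + (1 / 16) * S := by
      conv_lhs => rw [hS, h2]
      rw [abs_le] at h1 h3 h4 h5 ⊢
      constructor <;> linarith [h1.1, h1.2, h3.1, h3.2, h4.1, h4.2, h5.1, h5.2]
    linarith
  intro u
  refine (hq u).trans ?_
  gcongr

lemma pow4_exp (y : ℝ) (hy : 0 ≤ y) : y ^ 4 ≤ 98304 * Real.exp (y / 8) := by
  have := Real.pow_div_factorial_le_exp (x := y / 8) (by positivity) 4
  norm_num [Nat.factorial] at this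
  have e : (y / 8) ^ 4 / 24 = y ^ 4 / 98304 := by ring
  rw [e, div_le_iff₀ (by norm_num)] at this
  linarith

lemma pow2_exp (y : ℝ) (hy : 0 ≤ y) : y ^ 2 ≤ 128 * Real.exp (y / 8) := by
  have := Real.pow_div_factorial_le_exp (x := y / 8) (by positivity) 2
  norm_num [Nat.factorial] at this
  have e : (y / 8) ^ 2 / 2 = y ^ 2 / 128 := by ring
  rw [e, div_le_iff₀ (by norm_num)] at this
  linarith

variable [MeasurableSpace V] [BorelSpace V]

lemma inner_eight (x : V) (hx : ‖x‖ ≤ 1) : ∫ a, ⟪a, x⟫ ^ 8 ∂(stdGaussian V) ≤ 196608 := by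
  obtain ⟨hi, hb⟩ := inner_exp x hx
  calc ∫ a, ⟪a, x⟫ ^ 8 ∂(stdGaussian V) ≤ ∫ a, 98304 * Real.exp (⟪a, x⟫ ^ 2 / 4) ∂(stdGaussian V) := by
        refine integral_mono (inner_pow_integrable x 8) (hi.const_mul _) fun a => ?_
        have h := pow4_exp (⟪a, x⟫ ^ 2) (sq_nonneg _)
        have h2 : Real.exp (⟪a, x⟫ ^ 2 / 8) ≤ Real.exp (⟪a, x⟫ ^ 2 / 4) :=
          Real.exp_le_exp.2 (by linarith [sq_nonneg ⟪a, x⟫])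
        have e : ⟪a, x⟫ ^ 8 = (⟪a, x⟫ ^ 2) ^ 4 := by ring
        simp only [e]
        linarith
    _ ≤ 196608 := by rw [integral_const_mul]; linarith

lemma qb_bias (x p : V) (hx : ‖x‖ = 1) (hp : ‖p‖ ≤ 3 / 2) (B : ℝ) (hB : 0 < B) :
    Integrable (fun a => min (⟪a, x⟫ ^ 2) B * ⟪a, p⟫ ^ 2) (stdGaussian V) ∧
    |∫ a, min (⟪a, x⟫ ^ 2) B * ⟪a, p⟫ ^ 2 ∂(stdGaussian V) - (‖p‖ ^ 2 + 2 * ⟪x, p⟫ ^ 2)| ≤ 98500 / B := by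
  have i0 := inner_sq_sq_int x p
  have hX0 : ∀ a : V, 0 ≤ min (⟪a, x⟫ ^ 2) B := fun a => le_min (sq_nonneg _) hB.le
  have i1 : Integrable (fun a => min (⟪a, x⟫ ^ 2) B * ⟪a, p⟫ ^ 2) (stdGaussian V) := by
    refine i0.mono' (by fun_prop) (ae_of_all _ fun a => ?_)
    rw [Real.norm_of_nonneg (mul_nonneg (hX0 a) (sq_nonneg _))]
    gcongr
    exact min_le_left _ _
  refine ⟨i1, ?_⟩
  have i8 := inner_pow_integrable x 8
  have i4 := inner_pow_integrable p 4
  have key : ∫ a, (⟪a, x⟫ ^ 2 * ⟪a, p⟫ ^ 2 - min (⟪a, x⟫ ^ 2) B * ⟪a, p⟫ ^ 2) ∂(stdGaussian V) ≤ 98500 / B := by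
    calc _ ≤ ∫ a, B⁻¹ * ((1 / 2) * ⟪a, x⟫ ^ 8 + (1 / 2) * ⟪a, p⟫ ^ 4) ∂(stdGaussian V) := by
          refine integral_mono (i0.sub i1) (((i8.const_mul _).add (i4.const_mul _)).const_mul _) fun a => ?_
          simp only
          have h1 : ⟪a, x⟫ ^ 2 - min (⟪a, x⟫ ^ 2) B ≤ B⁻¹ * ⟪a, x⟫ ^ 4 := by
            rcases le_total (⟪a, x⟫ ^ 2) B with h | h
            · rw [min_eq_left h, sub_self]; positivity
            · rw [min_eq_right h]
              have : ⟪a, x⟫ ^ 2 ≤ B⁻¹ * ⟪a, x⟫ ^ 4 := by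
                rw [inv_mul_eq_div, le_div_iff₀ hB]
                nlinarith [sq_nonneg ⟪a, x⟫]
              linarith
          calc _ = (⟪a, x⟫ ^ 2 - min (⟪a, x⟫ ^ 2) B) * ⟪a, p⟫ ^ 2 := by ring
            _ ≤ B⁻¹ * ⟪a, x⟫ ^ 4 * ⟪a, p⟫ ^ 2 := by gcongr
            _ = B⁻¹ * (⟪a, x⟫ ^ 4 * ⟪a, p⟫ ^ 2) := by ring
            _ ≤ _ := by
              gcongr
              nlinarith [sq_nonneg (⟪a, x⟫ ^ 4 - ⟪a, p⟫ ^ 2)]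
      _ = B⁻¹ * ((1 / 2) * ∫ a, ⟪a, x⟫ ^ 8 ∂(stdGaussian V) + (1 / 2) * ∫ a, ⟪a, p⟫ ^ 4 ∂(stdGaussian V)) := by
          rw [integral_const_mul, integral_add (i8.const_mul _) (i4.const_mul _), integral_const_mul,
            integral_const_mul]
      _ ≤ B⁻¹ * 98500 := by
          gcongr
          rw [inner_four]
          have := inner_eight x hx.le
          have h4 : ‖p‖ ^ 4 ≤ (3 / 2) ^ 4 := by gcongr
          norm_num at h4
          linarith
      _ = 98500 / B := by ring
  have key0 : 0 ≤ ∫ a, (⟪a, x⟫ ^ 2 * ⟪a, p⟫ ^ 2 - min (⟪a, x⟫ ^ 2) B * ⟪a, p⟫ ^ 2) ∂(stdGaussian V) := by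
    refine integral_nonneg fun a => ?_
    simp only [Pi.zero_apply, sub_nonneg]
    gcongr
    exact min_le_left _ _
  rw [integral_sub i0 i1, inner_sq_sq, hx] at key key0
  rw [abs_le]
  constructor <;> linarith

lemma qb_mom (x p : V) (hx : ‖x‖ = 1) (hp : ‖p‖ ≤ 3 / 2) (B lam : ℝ) (hB : 0 < B) (hl : 0 ≤ lam)
    (hlB : lam * B ≤ 1 / 36) :
    Integrable (fun a => (min (⟪a, x⟫ ^ 2) B * ⟪a, p⟫ ^ 2) ^ 2 *
      Real.exp |lam * (min (⟪a, x⟫ ^ 2) B * ⟪a, p⟫ ^ 2)|) (stdGaussian V) ∧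
    ∫ a, (min (⟪a, x⟫ ^ 2) B * ⟪a, p⟫ ^ 2) ^ 2 *
      Real.exp |lam * (min (⟪a, x⟫ ^ 2) B * ⟪a, p⟫ ^ 2)| ∂(stdGaussian V) ≤ 2654208 := by
  have hX0 : ∀ a : V, 0 ≤ min (⟪a, x⟫ ^ 2) B := fun a => le_min (sq_nonneg _) hB.le
  set p' := (2 / 3 : ℝ) • p with hp'
  have hpn : ‖p'‖ ≤ 1 := by rw [hp', norm_smul]; norm_num; linarith
  obtain ⟨ix, bx⟩ := inner_exp x hx.le
  obtain ⟨ip, bp⟩ := inner_exp p' hpn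
  have hle : ∀ a : V, (min (⟪a, x⟫ ^ 2) B * ⟪a, p⟫ ^ 2) ^ 2 *
      Real.exp |lam * (min (⟪a, x⟫ ^ 2) B * ⟪a, p⟫ ^ 2)| ≤
      49152 * Real.exp (⟪a, x⟫ ^ 2 / 4) + 1277952 * Real.exp (⟪a, p'⟫ ^ 2 / 4) := by
    intro a
    have hr : ⟪a, p⟫ = (3 / 2) * ⟪a, p'⟫ := by rw [hp', inner_smul_right]; ring
    have h0 := hX0 a
    have hm1 : min (⟪a, x⟫ ^ 2) B ≤ ⟪a, x⟫ ^ 2 := min_le_left _ _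
    have hm2 : min (⟪a, x⟫ ^ 2) B ≤ B := min_le_right _ _
    rw [abs_of_nonneg (by positivity), hr]
    generalize ⟪a, x⟫ = g at *
    generalize ⟪a, p'⟫ = r at *
    have hexp : lam * (min (g ^ 2) B * (3 / 2 * r) ^ 2) ≤ r ^ 2 / 16 := by
      have : lam * min (g ^ 2) B ≤ 1 / 36 := le_trans (by gcongr) hlB
      nlinarith [sq_nonneg r]
    have e1 : Real.exp (lam * (min (g ^ 2) B * (3 / 2 * r) ^ 2)) ≤ Real.exp (r ^ 2 / 16) :=
      Real.exp_le_exp.2 hexp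
    have h1 := pow4_exp (g ^ 2) (sq_nonneg _)
    have h2 := pow4_exp (r ^ 2) (sq_nonneg _)
    have e2 : Real.exp (g ^ 2 / 8) ≤ Real.exp (g ^ 2 / 4) :=
      Real.exp_le_exp.2 (by linarith [sq_nonneg g])
    have e3 : Real.exp (r ^ 2 / 8) * Real.exp (r ^ 2 / 8) = Real.exp (r ^ 2 / 4) := by
      rw [← Real.exp_add]; congr 1; ring
    have e4 : Real.exp (r ^ 2 / 16) ^ 2 = Real.exp (r ^ 2 / 8) := by
      rw [← Real.exp_nat_mul]; congr 1; push_cast; ring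
    calc (min (g ^ 2) B * (3 / 2 * r) ^ 2) ^ 2 * Real.exp (lam * (min (g ^ 2) B * (3 / 2 * r) ^ 2))
        ≤ (g ^ 2 * (3 / 2 * r) ^ 2) ^ 2 * Real.exp (r ^ 2 / 16) := by gcongr
      _ = g ^ 4 * ((3 / 2) ^ 4 * r ^ 4 * Real.exp (r ^ 2 / 16)) := by ring
      _ ≤ (1 / 2) * (g ^ 2) ^ 4 + (1 / 2) * ((3 / 2) ^ 8 * (r ^ 2) ^ 4 * Real.exp (r ^ 2 / 16) ^ 2) := by
          nlinarith [sq_nonneg (g ^ 4 - ((3 / 2) ^ 4 * r ^ 4 * Real.exp (r ^ 2 / 16)))]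
      _ ≤ (1 / 2) * (98304 * Real.exp (g ^ 2 / 4)) +
          (1 / 2) * ((26 * (98304 * Real.exp (r ^ 2 / 8))) * Real.exp (r ^ 2 / 8)) := by
          rw [e4]
          gcongr
          · linarith
          · norm_num
      _ = _ := by
          rw [← e3]; ring
  have ib := (ix.const_mul 49152).add (ip.const_mul 1277952)
  have ii : Integrable (fun a => (min (⟪a, x⟫ ^ 2) B * ⟪a, p⟫ ^ 2) ^ 2 *
      Real.exp |lam * (min (⟪a, x⟫ ^ 2) B * ⟪a, p⟫ ^ 2)|) (stdGaussian V) := by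
    refine ib.mono' (by fun_prop) (ae_of_all _ fun a => ?_)
    rw [Real.norm_of_nonneg (by positivity)]
    exact hle a
  refine ⟨ii, (integral_mono ii ib hle).trans ?_⟩
  simp only [Pi.add_apply]
  rw [integral_add (ix.const_mul _) (ip.const_mul _), integral_const_mul, integral_const_mul]
  linarith

lemma qb_prob (x : V) (hx : ‖x‖ = 1) (B lam0 ε : ℝ) (hε : 0 < ε) (hB : 1 ≤ B)
    (hbias : 98500 / B ≤ ε / 16) (hl : 0 < lam0) (hl1 : lam0 ≤ 1 / 36)
    (hl2 : lam0 * 2654208 ≤ ε / 32) (hm : 1 ≤ m)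
    (hN : 10 * B * (Module.finrank ℝ V + Real.log m) ≤ lam0 * (ε / 16) * m) :
    PV V m {a | (∀ l, ⟪a l, x⟫ ^ 2 ≤ B) ∧ ¬ QB a x ε} ≤ ENNReal.ofReal (2 / m) := by
  classical
  obtain ⟨s, hs1, hs2, hs3⟩ := exists_net V
  set n := Module.finrank ℝ V with hn
  have hm' : (1:ℝ) ≤ m := by exact_mod_cast hm
  have hL : 0 ≤ Real.log m := Real.log_nonneg hm'
  have hB0 : 0 < B := by linarith
  set lam := lam0 / B with hlam
  have hlB : lam * B = lam0 := by rw [hlam]; field_simp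
  have hl0 : 0 < lam := by positivity
  let pt : V × V → V := fun q => q.1 + (1 / 2 : ℝ) • q.2
  let X : V → V → ℝ := fun p a => min (⟪a, x⟫ ^ 2) B * ⟪a, p⟫ ^ 2
  let E : V × V → Set (Fin m → V) := fun q =>
    {a | ε / 16 < |(m:ℝ)⁻¹ * ∑ l, X (pt q) (a l) - ∫ a, X (pt q) a ∂(stdGaussian V)|}
  have hpt : ∀ q ∈ s ×ˢ s, ‖pt q‖ ≤ 3 / 2 := by
    intro q hq
    simp only [Finset.mem_product] at hq
    refine (norm_add_le _ _).trans ?_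
    rw [norm_smul]
    have := hs2 _ hq.1
    have := hs2 _ hq.2
    norm_num
    linarith
  have hsub : {a : Fin m → V | (∀ l, ⟪a l, x⟫ ^ 2 ≤ B) ∧ ¬ QB a x ε} ⊆ ⋃ q ∈ s ×ˢ s, E q := by
    rintro a ⟨ha1, ha2⟩
    by_contra hcon
    simp only [Set.mem_iUnion, not_exists] at hcon
    apply ha2
    have h8 : ε = 8 * (ε / 8) := by ring
    rw [h8]
    refine qb_net a x s (ε / 8) hs2 hs3 fun v hv v' hv' => ?_
    have hmem : (v, v') ∈ s ×ˢ s := by simp [hv, hv']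
    have h1 := hcon (v, v') hmem
    simp only [E, Set.mem_ofPred_eq, not_lt] at h1
    have h2 := (qb_bias x (pt (v, v')) hx (hpt _ hmem) B hB0).2
    have h3 : qf a x (pt (v, v')) = (m:ℝ)⁻¹ * ∑ l, X (pt (v, v')) (a l) -
        (‖pt (v, v')‖ ^ 2 + 2 * ⟪x, pt (v, v')⟫ ^ 2) := by
      unfold qf
      congr 2
      refine Finset.sum_congr rfl fun l _ => ?_
      simp only [X]
      rw [min_eq_left (ha1 l)]
    change |qf a x (pt (v, v'))| ≤ ε / 8
    rw [h3]
    change |∫ a, X (pt (v, v')) a ∂(stdGaussian V) - _| ≤ _ at h2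
    rw [abs_le] at h1 h2 ⊢
    constructor <;> linarith [h1.1, h1.2, h2.1, h2.2]
  refine (measure_mono hsub).trans ?_
  refine sum_bound _ _ E (2 * Real.exp (-(5 * (n + Real.log m)))) _ (by positivity) ?_ ?_
  · intro q hq
    have hb := qb_bias x (pt q) hx (hpt q hq) B hB0
    have hmo := qb_mom x (pt q) hx (hpt q hq) B lam hB0 hl0.le (by rw [hlB]; exact hl1)
    refine (bernstein2 (m := m) (stdGaussian V) (X (pt q)) (by fun_prop) lam 2654208 _ (ε / 16) hl0.le
      hb.1 rfl hmo.1 hmo.2 (by linarith)).trans ?_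
    rw [ENNReal.ofReal_mul (by norm_num)]
    norm_num
    gcongr
    have e1 : m * (lam ^ 2 * 2654208) - lam * (m * (ε / 16)) = -(lam * m * (ε / 16 - lam * 2654208)) := by
      ring
    rw [e1]
    have h1 : lam ≤ lam0 := div_le_self hl.le hB
    have h2 : ε / 32 ≤ ε / 16 - lam * 2654208 := by linarith
    have h3 : lam * m * (ε / 32) ≤ lam * m * (ε / 16 - lam * 2654208) := by gcongr
    have h4 : 5 * (n + Real.log m) ≤ lam * m * (ε / 32) := by
      rw [hlam, div_mul_eq_mul_div, div_mul_eq_mul_div, le_div_iff₀ hB0]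
      linarith
    linarith
  · have h5 : (s.card : ℝ) ≤ Real.exp (2 * n) := le_trans (by exact_mod_cast hs1) (five_pow_le n)
    rw [Finset.card_product]
    push_cast
    have hn0 : (0:ℝ) ≤ n := by positivity
    calc (s.card : ℝ) * s.card * (2 * Real.exp (-(5 * (n + Real.log m))))
        ≤ Real.exp (2 * n) * Real.exp (2 * n) * (2 * Real.exp (-(5 * (n + Real.log m)))) := by gcongr
      _ = 2 * Real.exp (2 * n + 2 * n - 5 * (n + Real.log m)) := by
          rw [sub_eq_add_neg, Real.exp_add, Real.exp_add]; ring
      _ ≤ 2 * Real.exp (- Real.log m) := by gcongr; linarith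
      _ = 2 / m := by rw [Real.exp_neg, Real.exp_log (by linarith)]; ring

lemma sg_prob (x : V) (hx : ‖x‖ = 1) (ε : ℝ) (hε : 0 < ε) (hε1 : ε ≤ 1) (hm : 1 ≤ m)
    (hL : 1024 * Real.log m ≤ ε ^ 2 * m) :
    PV V m {a | ¬ |sig2 a x - 1| ≤ ε} ≤ ENNReal.ofReal (2 / m) := by
  have hm' : (1:ℝ) ≤ m := by exact_mod_cast hm
  obtain ⟨ix, bx⟩ := inner_exp x hx.le
  have hle : ∀ a : V, (⟪a, x⟫ ^ 2) ^ 2 * Real.exp |(ε / 512) * ⟪a, x⟫ ^ 2| ≤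
      128 * Real.exp (⟪a, x⟫ ^ 2 / 4) := by
    intro a
    rw [abs_of_nonneg (by positivity)]
    have h := pow2_exp (⟪a, x⟫ ^ 2) (sq_nonneg _)
    calc _ ≤ 128 * Real.exp (⟪a, x⟫ ^ 2 / 8) * Real.exp (⟪a, x⟫ ^ 2 / 8) := by
          gcongr
          nlinarith [sq_nonneg ⟪a, x⟫]
      _ = _ := by
          rw [mul_assoc, ← Real.exp_add]; congr 2; ring
  have ib := ix.const_mul 128
  have ii : Integrable (fun a => (⟪a, x⟫ ^ 2) ^ 2 * Real.exp |(ε / 512) * ⟪a, x⟫ ^ 2|) (stdGaussian V) := by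
    refine ib.mono' (by fun_prop) (ae_of_all _ fun a => ?_)
    rw [Real.norm_of_nonneg (by positivity)]
    exact hle a
  have hM : ∫ a, (⟪a, x⟫ ^ 2) ^ 2 * Real.exp |(ε / 512) * ⟪a, x⟫ ^ 2| ∂(stdGaussian V) ≤ 256 := by
    refine (integral_mono ii ib hle).trans ?_
    rw [integral_const_mul]; linarith
  have he := inner_sq x
  rw [hx, one_pow] at he
  have := bernstein2 (m := m) (stdGaussian V) (fun a => ⟪a, x⟫ ^ 2) (by fun_prop) (ε / 512) 256 1 ε
    (by positivity) (inner_pow_integrable x 2) he ii hM (by linarith)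
  refine le_trans (measure_mono ?_) (this.trans ?_)
  · intro a ha
    simp only [Set.mem_ofPred_eq, not_le, sig2] at ha ⊢
    exact ha
  · have e : (2:ℝ) / m = 2 * Real.exp (-Real.log m) := by
      rw [Real.exp_neg, Real.exp_log (by linarith)]; ring
    rw [e, ENNReal.ofReal_mul (by norm_num)]
    norm_num
    gcongr
    have : m * ((ε / 512) ^ 2 * 256) - ε / 512 * (m * ε) = -(ε ^ 2 * m / 1024) := by ring
    rw [this]
    linarith

end ProbI
end WF

namespace WF

section ProbJ

variable {V : Type*} [NormedAddCommGroup V] [InnerProductSpace ℝ V] [FiniteDimensional ℝ V]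
  [MeasurableSpace V] [BorelSpace V] {m : ℕ}

local notation "⟪" x "," y "⟫" => inner ℝ x y

lemma meas_Gop (x : V) (u : (Fin m → V) → V) (hu : Measurable u) :
    Measurable (fun a : Fin m → V => Gop a x (u a)) := by
  unfold Gop
  refine Measurable.const_smul (Finset.measurable_fun_sum _ fun l _ => ?_) _
  have h1 : Measurable (fun a : Fin m → V => a l) := measurable_pi_apply l
  exact Measurable.smul (((h1.inner measurable_const).pow_const 2).mul (h1.inner hu)) h1

lemma meas_gradf (x : V) (u : (Fin m → V) → V) (hu : Measurable u) :
    Measurable (fun a : Fin m → V => gradf a x (u a)) := by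
  unfold gradf
  refine Measurable.const_smul (Finset.measurable_fun_sum _ fun l _ => ?_) _
  have h1 : Measurable (fun a : Fin m → V => a l) := measurable_pi_apply l
  exact Measurable.smul ((((h1.inner hu).pow_const 2).sub ((h1.inner measurable_const).pow_const 2)).mul
    (h1.inner hu)) h1

lemma meas_sig2 (x : V) : Measurable (fun a : Fin m → V => sig2 a x) := by
  unfold sig2
  refine Measurable.const_mul (Finset.measurable_fun_sum _ fun l _ => ?_) _
  have h1 : Measurable (fun a : Fin m → V => a l) := measurable_pi_apply l
  exact (h1.inner measurable_const).pow_const 2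

lemma meas_pw (x : V) (k : ℕ) : Measurable (fun a : Fin m → V => pw a x k) := by
  induction k with
  | zero => exact measurable_const
  | succ k ih =>
    have h := meas_Gop x _ ih
    exact Measurable.smul (measurable_const.inner h).inv h

lemma meas_tr (x : V) (α : ℝ) (k : ℕ) : Measurable (fun a : Fin m → V => tr a x α k) := by
  induction k with
  | zero =>
    have h := meas_pw (m := m) x m
    exact Measurable.smul ((meas_sig2 x).sqrt.div h.norm) h
  | succ k ih =>
    exact ih.sub (Measurable.smul (measurable_const.div (meas_sig2 x)) (meas_gradf x _ ih))

lemma loo_prob {ι : Type*} (s : Finset ι) (F : ι → (Fin m → V) → V) (hF : ∀ i, Measurable (F i))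
    (t c : ℝ) (ht : 0 ≤ t) (hm : 1 ≤ m) (htL : 16 * Real.log m ≤ t ^ 2) (hc : s.card * 2 ≤ c * m ^ 2) :
    PV V m {a | ¬ ∀ l, ∀ i ∈ s, |⟪a l, F i (Function.update a l 0)⟫| ≤ t * ‖F i (Function.update a l 0)‖} ≤
      ENNReal.ofReal (c / m) := by
  classical
  have hm' : (1:ℝ) ≤ m := by exact_mod_cast hm
  let E : Fin m × ι → Set (Fin m → V) := fun q =>
    {a | t * ‖F q.2 (Function.update a q.1 0)‖ < |⟪a q.1, F q.2 (Function.update a q.1 0)⟫|}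
  have hsub : {a : Fin m → V | ¬ ∀ l, ∀ i ∈ s, |⟪a l, F i (Function.update a l 0)⟫| ≤
      t * ‖F i (Function.update a l 0)‖} ⊆ ⋃ q ∈ Finset.univ ×ˢ s, E q := by
    intro a ha
    simp only [Set.mem_ofPred_eq, not_forall, not_le] at ha
    obtain ⟨l, i, hi, h⟩ := ha
    simp only [Set.mem_iUnion]
    exact ⟨(l, i), by simp [hi], h⟩
  refine (measure_mono hsub).trans ?_
  refine sum_bound _ _ E (2 * ((m:ℝ)⁻¹) ^ 4) _ (by positivity) ?_ ?_
  · intro q _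
    refine (loo q.1 (F q.2) (hF q.2) t ht).trans (ENNReal.ofReal_le_ofReal ?_)
    gcongr
    have : ((m:ℝ)⁻¹) ^ 4 = Real.exp (-(4 * Real.log m)) := by
      rw [Real.exp_neg, show (4:ℝ) * Real.log m = (4:ℕ) * Real.log m by norm_num, Real.exp_nat_mul,
        Real.exp_log (by linarith), inv_pow]
    rw [this]
    apply Real.exp_le_exp.2
    linarith
  · rw [Finset.card_product, Finset.card_univ, Fintype.card_fin]
    push_cast
    calc (m:ℝ) * s.card * (2 * (m:ℝ)⁻¹ ^ 4) = (s.card * 2) * ((m:ℝ)⁻¹) ^ 3 := by field_simp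
      _ ≤ (c * m ^ 2) * ((m:ℝ)⁻¹) ^ 3 := by gcongr
      _ = c / m := by field_simp

lemma rho_bound (N : ℝ) (hm : 1280000 ≤ (m:ℝ)) (hN : N ≤ m) : (799 / 800 : ℝ) ^ m * √N ≤ 1 := by
  have h1 : (799 / 800 : ℝ) ^ m ≤ Real.exp (-(m / 800)) := by
    have : (799 / 800 : ℝ) ≤ Real.exp (-(1 / 800)) := by
      have := Real.add_one_le_exp (-(1 / 800) : ℝ)
      linarith
    calc (799 / 800 : ℝ) ^ m ≤ Real.exp (-(1 / 800)) ^ m := by gcongr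
      _ = Real.exp (-(m / 800)) := by
        rw [← Real.exp_nat_mul]; congr 1; ring
  have h2 : √N ≤ m := by
    rw [Real.sqrt_le_left (by linarith)]
    nlinarith
  have h3 := Real.quadratic_le_exp_of_nonneg (x := (m:ℝ) / 800) (by positivity)
  have h4 : (m:ℝ) ≤ Real.exp (m / 800) := by nlinarith
  calc (799 / 800 : ℝ) ^ m * √N ≤ Real.exp (-(m / 800)) * Real.exp (m / 800) := by
        gcongr
        exact h2.trans h4
    _ = 1 := by rw [← Real.exp_add]; simp

theorem good_prob (x : V) (hx : ‖x‖ = 1) (hL : 10 ^ 9 ≤ Real.log m)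
    (hN : (Module.finrank ℝ V + Real.log m) * Real.log m ≤ 1 / 10 ^ 27 * m) :
    PV V m {a | ¬ Good a x √(Real.log m) √(Module.finrank ℝ V + Real.log m) 104 (1 / 10 ^ 27)
      (1 / 640000) (1 / 40000)} ≤ ENNReal.ofReal (14 / m) := by
  set L := Real.log m with hLdef
  set N := (Module.finrank ℝ V : ℝ) + L with hNdef
  have hn0 : (0:ℝ) ≤ Module.finrank ℝ V := by positivity
  have hm0 : (0:ℝ) < m := by
    by_contra h
    have : (m:ℝ) = 0 := le_antisymm (not_lt.1 h) (by positivity)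
    rw [hLdef, this, Real.log_zero] at hL
    norm_num at hL
  have hm : 1 ≤ m := by
    have : 0 < m := by exact_mod_cast hm0
    omega
  have hLN : L ≤ N := by rw [hNdef]; linarith
  have hLm : L ≤ m := by
    have := Real.log_le_sub_one_of_pos hm0
    linarith
  have hNm : N ≤ m := by nlinarith
  have hsL : √L ^ 2 = L := Real.sq_sqrt (by linarith)
  have hsN : √N ^ 2 = N := Real.sq_sqrt (by linarith)
  have hLL : L * L ≤ N * L := mul_le_mul_of_nonneg_right hLN (by linarith)
  have p1 := tb_prob (V := V) hm
  have p2 := qb_prob (V := V) (m := m) x hx (104 ^ 2 * L) (1 / 10 ^ 14) (1 / 640000) (by norm_num) (by linarith)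
    (by rw [div_le_iff₀ (by linarith)]; linarith) (by norm_num) (by norm_num) (by norm_num) hm (by
      rw [← hLdef, ← hNdef]; nlinarith)
  have p3 := sg_prob (V := V) (m := m) x hx (1 / 640000) (by norm_num) (by norm_num) hm (by
    rw [← hLdef]; nlinarith)
  have ht0 : 0 ≤ 104 * √L := by positivity
  have htL : 16 * Real.log m ≤ (104 * √L) ^ 2 := by
    rw [mul_pow, hsL, ← hLdef]; linarith
  have hmsq : (1:ℝ) ≤ (m:ℝ) ^ 2 := by
    have : (1:ℝ) ≤ m := by exact_mod_cast hm
    nlinarith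
  have p4 := loo_prob (V := V) (m := m) {()} (fun _ _ => x) (fun _ => measurable_const) (104 * √L) 2 ht0 hm htL
    (by simp; linarith)
  have p5 := loo_prob (V := V) (m := m) {()} (fun _ a => pw a x m) (fun _ => meas_pw x m) (104 * √L) 2 ht0 hm htL
    (by simp; linarith)
  have p6 := loo_prob (V := V) (m := m) (Finset.range (m + 1)) (fun k a => tr a x (1 / 200) k - x)
    (fun k => (meas_tr x _ k).sub_const _) (104 * √L) 4 ht0 hm htL (by
      rw [Finset.card_range]; push_cast
      have : (1:ℝ) ≤ m := by exact_mod_cast hm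
      nlinarith)
  rw [← hLdef, ← hNdef] at p1
  refine le_trans (measure_mono (t := _ ∪ (_ ∪ (_ ∪ (_ ∪ (_ ∪ _))))) ?_)
    ((measure_union_le _ _).trans (add_le_add p1 ((measure_union_le _ _).trans (add_le_add p2
      ((measure_union_le _ _).trans (add_le_add p3 ((measure_union_le _ _).trans (add_le_add p4
        ((measure_union_le _ _).trans (add_le_add p5 p6)))))))))|>.trans ?_)
  · intro a ha
    by_contra hcon
    simp only [Set.mem_union, not_or, Set.mem_ofPred_eq, not_not, not_and] at hcon
    obtain ⟨c1, c2, c3, c4, c5, c6⟩ := hcon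
    apply ha
    have gx : ∀ l, |⟪a l, x⟫| ≤ 104 * √L := fun l => by
      have := c4 l () (by simp)
      simpa [hx] using this
    have gx2 : ∀ l, ⟪a l, x⟫ ^ 2 ≤ 104 ^ 2 * L := fun l => by
      have h := gx l
      rw [← sq_abs, ← hsL, ← mul_pow]
      gcongr
    exact {
      hx := hx
      hε0 := by norm_num
      hεδ := by norm_num
      hδ0 := by norm_num
      hδ := by norm_num
      hK := by norm_num
      hS := by rw [Real.one_le_sqrt]; linarith
      hST := Real.sqrt_le_sqrt hLN
      hm := hm0
      hκ0 := by norm_num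
      hST2 := by rw [hsL, hsN]; linarith
      hκ := by norm_num
      hρ := rho_bound N (by linarith) hNm
      qb := c2 gx2
      sg := c3
      gx := gx
      an := fun l => by
        have := c1.an hm0 (by norm_num) (by linarith : 1 ≤ L) hLdef hLN (by linarith) l
        norm_num at this
        exact this
      eb := fun h hh hl => c1.eb (κ := 1 / 10 ^ 27) hm0 (by norm_num) (by norm_num : (1:ℝ) ≤ 104) (by norm_num) (by norm_num)
        (by linarith : 1 ≤ L) hLdef hLN (by norm_num) hN (by norm_num) (by norm_num) (by norm_num) h hh hl
      looT := fun l k hk => c6 l k (by simp; omega)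
      looP := fun l => c5 l () (by simp) }
  · have hd : ∀ c : ℝ, 0 ≤ c → 0 ≤ c / (m:ℝ) := fun c hc => by positivity
    rw [← ENNReal.ofReal_add (hd 2 (by norm_num)) (hd 4 (by norm_num)), ← ENNReal.ofReal_add (hd 2 (by norm_num)) (by positivity),
      ← ENNReal.ofReal_add (hd 2 (by norm_num)) (by positivity), ← ENNReal.ofReal_add (hd 2 (by norm_num)) (by positivity),
      ← ENNReal.ofReal_add (hd 2 (by norm_num)) (by positivity)]
    apply ENNReal.ofReal_le_ofReal
    apply le_of_eq
    ring

end ProbJ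
end WF

namespace WF

/-- arithmetic reduction of the sample size condition -/
lemma param (n m : ℕ) (hn : 2 ≤ n) (h : Real.exp (10 ^ 9) * n * Real.log n ≤ m) :
    10 ^ 9 ≤ Real.log m ∧ (n + Real.log m) * Real.log m ≤ 1 / 10 ^ 27 * m ∧ (n:ℝ) ≤ m := by
  have hn' : (2:ℝ) ≤ n := by exact_mod_cast hn
  have hln : 69 / 100 ≤ Real.log n := by
    have := Real.log_two_gt_d9
    have := Real.log_le_log (by norm_num) hn'
    linarith
  have hC0 : 0 < Real.exp (10 ^ 9) := Real.exp_pos _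
  have he7 : ∀ y : ℝ, 0 ≤ y → y ^ 7 / 5040 ≤ Real.exp y := by
    intro y hy
    have := Real.pow_div_factorial_le_exp (x := y) hy 7
    norm_num [Nat.factorial] at this
    exact this
  have hC : (4 * 10 ^ 27 : ℝ) ≤ Real.exp (10 ^ 9) := by
    refine le_trans ?_ (he7 _ (by norm_num))
    norm_num
  have hnl : 1 ≤ (n:ℝ) * Real.log n := by nlinarith
  have hCm : Real.exp (10 ^ 9) ≤ m := by
    refine le_trans ?_ h
    rw [mul_assoc]
    exact le_mul_of_one_le_right hC0.le hnl
  have hm0 : (0:ℝ) < m := lt_of_lt_of_le hC0 hCm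
  have hL : 10 ^ 9 ≤ Real.log m := (Real.le_log_iff_exp_le hm0).2 hCm
  have hmL : Real.exp (Real.log m) = m := Real.exp_log hm0
  generalize Real.exp (10 ^ 9) = C at *
  set L := Real.log m with hLd
  have hL0 : 0 ≤ L := by linarith
  have h1 : L * L ≤ 1 / 10 ^ 27 / 2 * m := by
    have h7 := he7 L hL0
    rw [hmL] at h7
    have h5 : (10 ^ 9 : ℝ) ^ 5 ≤ L ^ 5 := by gcongr
    have : L ^ 7 = L ^ 5 * (L * L) := by ring
    have h6 : (10 ^ 9 : ℝ) ^ 5 * (L * L) ≤ L ^ 7 := by rw [this]; gcongr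
    norm_num at h6 h7 ⊢
    linarith [mul_nonneg hL0 hL0]
  have h2 : n * L ≤ 1 / 10 ^ 27 / 2 * m := by
    rcases le_total ((m:ℝ)) ((n:ℝ) ^ 2) with hc | hc
    · have hl2 : L ≤ 2 * Real.log n := by
        have := Real.log_le_log hm0 hc
        rw [Real.log_pow] at this
        exact_mod_cast this
      have h3 : n * L ≤ 2 * (n * Real.log n) := by nlinarith
      have h4 : (4 * 10 ^ 27) * (n * Real.log n) ≤ C * (n * Real.log n) := by gcongr
      norm_num at h4 ⊢
      linarith
    · have hs : (n:ℝ) ≤ Real.exp (L / 2) := by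
        have : Real.exp (L / 2) ^ 2 = m := by
          rw [← Real.exp_nat_mul, ← hmL]; congr 1; push_cast; ring
        rw [← this] at hc
        exact le_of_sq_le_sq hc (Real.exp_pos _).le
      have hs2 : Real.exp (L / 2) * Real.exp (L / 2) = m := by
        rw [← Real.exp_add, ← hmL]; congr 1; ring
      have h7 := he7 (L / 2) (by linarith)
      have h6 : (10 ^ 9 : ℝ) ^ 6 * L ≤ L ^ 7 := by
        have : L ^ 7 = L ^ 6 * L := by ring
        rw [this]; gcongr
      have h8 : (2 * 10 ^ 27) * L ≤ Real.exp (L / 2) := by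
        refine le_trans ?_ h7
        rw [div_pow, le_div_iff₀ (by norm_num), le_div_iff₀ (by norm_num)]
        norm_num at h6 ⊢
        linarith
      have h9 : n * ((2 * 10 ^ 27) * L) ≤ m := by
        rw [← hs2]; gcongr
      norm_num at h9 ⊢
      linarith
  have h3 : (n + L) * L ≤ 1 / 10 ^ 27 * m := by linarith
  refine ⟨hL, h3, ?_⟩
  norm_num at h2
  nlinarith

section Scaled

variable {V : Type*} [NormedAddCommGroup V] [InnerProductSpace ℝ V] [FiniteDimensional ℝ V] {m : ℕ}

local notation "⟪" x "," y "⟫" => inner ℝ x y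

lemma sig2_scale (a : Fin m → V) (x : V) (d : ℝ) : sig2 a (d • x) = d ^ 2 * sig2 a x := by
  unfold sig2
  simp only [inner_smul_right, mul_pow, ← Finset.mul_sum]
  ring

lemma Gop_scale (a : Fin m → V) (x u : V) (d : ℝ) : Gop a (d • x) u = d ^ 2 • Gop a x u := by
  unfold Gop
  simp only [inner_smul_right, mul_pow, Finset.smul_sum, smul_smul]
  refine Finset.sum_congr rfl fun l _ => ?_
  congr 1; ring

lemma gradf_scale (a : Fin m → V) (x z : V) (c d : ℝ) (h : c ^ 2 = d ^ 2) :
    gradf a (d • x) (c • z) = (c * d ^ 2) • gradf a x z := by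
  unfold gradf
  simp only [inner_smul_right, mul_pow, Finset.smul_sum, smul_smul, h]
  refine Finset.sum_congr rfl fun l _ => ?_
  congr 1; ring

theorem scaled {a : Fin m → V} {S T K κ ε δ : ℝ} (x : V) (hx : x ≠ 0)
    (G : Good a (‖x‖⁻¹ • x) S T K κ ε δ) (z : ℕ → V) (lam : ℝ)
    (h1 : Gop a x (z 0) = lam • z 0)
    (h2 : ∀ (μ : ℝ) (w : V), w ≠ 0 → Gop a x w = μ • w → μ ≤ lam)
    (h3 : ‖z 0‖ ^ 2 = sig2 a x)
    (hz : ∀ k, z (k + 1) = z k - ((1 / 200) / sig2 a x) • gradf a x (z k)) :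
    min ‖z 0 - x‖ ‖z 0 + x‖ ≤ 1 / 8 * ‖x‖ ∧
    ∀ k, min ‖z k - x‖ ‖z k + x‖ ≤ (799 / 800) ^ k * min ‖z 0 - x‖ ‖z 0 + x‖ := by
  have hr : 0 < ‖x‖ := norm_pos_iff.2 hx
  set d := ‖x‖⁻¹ with hd
  have hd0 : 0 < d := inv_pos.2 hr
  have hdr : d * ‖x‖ = 1 := inv_mul_cancel₀ hr.ne'
  obtain ⟨s, hs, hsi⟩ : ∃ s : ℝ, (s = 1 ∨ s = -1) ∧ 0 ≤ s * ⟪x, z 0⟫ := by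
    rcases le_total 0 ⟪x, z 0⟫ with h | h
    · exact ⟨1, Or.inl rfl, by linarith⟩
    · exact ⟨-1, Or.inr rfl, by linarith⟩
  have hs2 : s ^ 2 = 1 := by rcases hs with h | h <;> rw [h] <;> norm_num
  set c := d * s with hc
  have hcd : c ^ 2 = d ^ 2 := by rw [hc, mul_pow, hs2, mul_one]
  have key := G.main (fun k => c • z k) (d ^ 2 * lam)
    (by rw [Gop_smul, Gop_scale, h1, smul_smul, smul_smul, smul_smul]; congr 1; ring)
    (by
      intro μ w hw he
      rw [Gop_scale] at he
      have : Gop a x w = (μ / d ^ 2) • w := by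
        rw [div_eq_inv_mul, ← smul_smul, ← he, smul_smul, inv_mul_cancel₀ (by positivity), one_smul]
      have := h2 _ w hw this
      rw [div_le_iff₀ (by positivity)] at this
      linarith)
    (by rw [norm_smul, mul_pow, Real.norm_eq_abs, sq_abs, hcd, h3, sig2_scale])
    (by
      rw [inner_smul_left, inner_smul_right, conj_trivial, hc]
      have : d * (d * s * ⟪x, z 0⟫) = d ^ 2 * (s * ⟪x, z 0⟫) := by ring
      rw [this]; positivity)
    (by
      intro k
      rw [hz k, smul_sub, gradf_scale _ _ _ _ _ hcd, sig2_scale, smul_smul, smul_smul]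
      congr 2
      rw [div_mul_eq_mul_div, mul_comm c (d ^ 2), mul_left_comm, mul_div_mul_left _ _ (by positivity)]
      ring)
  have hn : ∀ k, ‖c • z k - d • x‖ = d * ‖s • z k - x‖ := by
    intro k
    rw [hc, ← smul_smul, ← smul_sub, norm_smul, Real.norm_of_nonneg hd0.le]
  have hmin : ∀ k, min ‖z k - x‖ ‖z k + x‖ = min ‖s • z k - x‖ ‖s • z k + x‖ := by
    intro k
    rcases hs with h | h
    · rw [h, one_smul]
    · rw [h, min_comm, neg_one_smul]
      congr 1
      · rw [← norm_neg]; congr 1; abel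
      · rw [← norm_neg]; congr 1; abel
  have hm0 : min ‖z 0 - x‖ ‖z 0 + x‖ = ‖s • z 0 - x‖ := by
    rw [hmin]
    apply min_eq_left
    apply le_of_sq_le_sq _ (norm_nonneg _)
    rw [norm_sub_sq_real, norm_add_sq_real, inner_smul_left, conj_trivial, real_inner_comm]
    linarith
  simp only [hn] at key
  obtain ⟨k1, k2⟩ := key
  constructor
  · rw [hm0]
    have : d * ‖s • z 0 - x‖ ≤ d * (1 / 8 * ‖x‖) := by
      rw [mul_left_comm, hdr]; linarith
    exact le_of_mul_le_mul_left this hd0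
  · intro k
    rw [hm0, hmin]
    refine (min_le_left _ _).trans ?_
    have : d * ‖s • z k - x‖ ≤ d * ((799 / 800) ^ k * ‖s • z 0 - x‖) := by
      rw [mul_left_comm]; exact k2 k
    exact le_of_mul_le_mul_left this hd0

end Scaled

section Bridge

variable {n m : ℕ}

local notation "⟪" x "," y "⟫" => inner ℝ x y

lemma l2norm_eq (y : Fin n → ℝ) : l2norm y = ‖WithLp.toLp 2 y‖ := by
  rw [EuclideanSpace.norm_eq, l2norm]
  simp

lemma signDist_eq (z x : Fin n → ℝ) : signDist z x =
    min ‖WithLp.toLp 2 z - WithLp.toLp 2 x‖ ‖WithLp.toLp 2 z + WithLp.toLp 2 x‖ := by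
  rw [signDist, l2norm_eq, l2norm_eq, WithLp.toLp_sub, WithLp.toLp_add]

lemma sum_eq_inner (u v : Fin n → ℝ) : ∑ i, u i * v i = ⟪WithLp.toLp 2 u, WithLp.toLp 2 v⟫ := by
  rw [EuclideanSpace.inner_toLp_toLp]
  simp only [dotProduct, star_trivial]
  exact Finset.sum_congr rfl fun i _ => mul_comm _ _

lemma mulVec_eq (a : Fin m → Fin n → ℝ) (x w : Fin n → ℝ) :
    WithLp.toLp 2 (((1 / (m : ℝ)) • ∑ ℓ, ((∑ i, a ℓ i * x i) ^ 2) •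
      Matrix.vecMulVec (a ℓ) (a ℓ)).mulVec w) =
    Gop (fun l => WithLp.toLp 2 (a l)) (WithLp.toLp 2 x) (WithLp.toLp 2 w) := by
  rw [Matrix.smul_mulVec, Matrix.sum_mulVec, WithLp.toLp_smul, WithLp.toLp_sum, Gop, one_div]
  congr 1
  refine Finset.sum_congr rfl fun l _ => ?_
  rw [Matrix.smul_mulVec, Matrix.vecMulVec_mulVec, op_smul_eq_smul, smul_smul, WithLp.toLp_smul, sum_eq_inner]
  congr 2
  exact sum_eq_inner _ _

lemma grad_eq (a : Fin m → Fin n → ℝ) (x z : Fin n → ℝ) (t : ℝ) :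
    WithLp.toLp 2 ((t / m) • ∑ ℓ, (((∑ i, a ℓ i * z i) ^ 2 - (∑ i, a ℓ i * x i) ^ 2)
                      * (∑ i, a ℓ i * z i)) • a ℓ) =
    t • gradf (fun l => WithLp.toLp 2 (a l)) (WithLp.toLp 2 x) (WithLp.toLp 2 z) := by
  rw [WithLp.toLp_smul, WithLp.toLp_sum, gradf, smul_smul, ← div_eq_mul_inv]
  congr 1
  refine Finset.sum_congr rfl fun l _ => ?_
  rw [WithLp.toLp_smul, sum_eq_inner, sum_eq_inner]

lemma mp_toLp : MeasurePreserving (fun (a : Fin m → Fin n → ℝ) (l : Fin m) => WithLp.toLp 2 (a l))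
    (gaussianVectors n m) (PV (EuclideanSpace ℝ (Fin n)) m) := by
  unfold gaussianVectors PV
  refine measurePreserving_pi _ _ (fun _ => ⟨?_, map_pi_eq_stdGaussian⟩)
  fun_prop

instance : IsProbabilityMeasure (gaussianVectors n m) := by unfold gaussianVectors; infer_instance

lemma bad_trivial_zero (z : ℕ → Fin n → ℝ) (a : Fin m → Fin n → ℝ)
    (h3 : (l2norm (z 0)) ^ 2 = (1 / (m : ℝ)) * ∑ ℓ, (∑ i, a ℓ i * (0 : Fin n → ℝ) i) ^ 2) (t : ℝ)
    (hz : ∀ k, z (k + 1) = z k - (t / (l2norm (z 0)) ^ 2 / m) •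
                  ∑ ℓ, (((∑ i, a ℓ i * z k i) ^ 2 - (∑ i, a ℓ i * (0 : Fin n → ℝ) i) ^ 2)
                      * (∑ i, a ℓ i * z k i)) • a ℓ) (k : ℕ) : z k = 0 := by
  induction k with
  | zero =>
    simp [l2norm_eq] at h3
    exact h3
  | succ k ih =>
    rw [hz, ih]; simp

end Bridge

end WF

/-- Wirtinger flow with spectral initialization and a suitable constant
stepsize `α_k = α/‖z₀‖₂²` converges linearly (up to global sign) to `x` from
`m ≥ C n log n` Gaussian phaseless measurements, with probability `≥ 1 − C' n^{−c}`. -/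
theorem wirtinger_flow : ∃ C C' c α ρ : ℝ,
    0 < C ∧ 0 < C' ∧ 0 < c ∧ 0 < α ∧ 0 < ρ ∧ ρ < 1 ∧
    ∀ (n m : ℕ) (x : Fin n → ℝ), (C * n * Real.log n ≤ m) →
      gaussianVectors n m
          {a : Fin m → Fin n → ℝ |
            ¬ ∀ z : ℕ → (Fin n → ℝ),
              -- z₀ is a top eigenvector of (1/m) Σ_ℓ y_ℓ a_ℓ a_ℓᵀ ...
              (∃ lam : ℝ,
                ((1 / (m : ℝ)) • ∑ ℓ, ((∑ i, a ℓ i * x i) ^ 2) •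
                    Matrix.vecMulVec (a ℓ) (a ℓ)).mulVec (z 0) = lam • z 0 ∧
                ∀ (μ' : ℝ) (w : Fin n → ℝ), w ≠ 0 →
                  ((1 / (m : ℝ)) • ∑ ℓ, ((∑ i, a ℓ i * x i) ^ 2) •
                      Matrix.vecMulVec (a ℓ) (a ℓ)).mulVec w = μ' • w → μ' ≤ lam) →
              -- ... rescaled so that ‖z₀‖₂² = (1/m) Σ_ℓ y_ℓ
              (l2norm (z 0)) ^ 2 = (1 / (m : ℝ)) * ∑ ℓ, (∑ i, a ℓ i * x i) ^ 2 →
              -- Wirtinger flow iteration with stepsize α_k = α/‖z₀‖₂²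
              (∀ k, z (k + 1) = z k - (α / (l2norm (z 0)) ^ 2 / m) •
                  ∑ ℓ, (((∑ i, a ℓ i * z k i) ^ 2 - (∑ i, a ℓ i * x i) ^ 2)
                      * (∑ i, a ℓ i * z k i)) • a ℓ) →
              signDist (z 0) x ≤ (1 / 8) * l2norm x ∧
              ∀ k, signDist (z k) x ≤ ρ ^ k * signDist (z 0) x}
        ≤ ENNReal.ofReal (C' * (n : ℝ) ^ (-c : ℝ)) := by
  refine ⟨Real.exp (10 ^ 9), 14, 1, 1 / 200, 799 / 800, Real.exp_pos _, by norm_num, by norm_num,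
    by norm_num, by norm_num, by norm_num, ?_⟩
  intro n m x hmn
  by_cases hx : x = 0
  · -- the trivial signal
    subst hx
    refine le_trans (le_of_eq ?_) zero_le
    convert measure_empty (μ := gaussianVectors n m)
    rw [Set.eq_empty_iff_forall_notMem]
    intro a ha
    apply ha
    intro z _ h3 hz
    have h0 := WF.bad_trivial_zero z a h3 _ hz
    simp [h0, WF.signDist_eq, WF.l2norm_eq]
  rcases Nat.lt_or_ge n 2 with hn | hn
  · -- small dimensions
    have hn1 : n = 1 := by
      rcases Nat.lt_or_ge n 1 with h | h
      · have : n = 0 := by omega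
        subst this
        exact absurd (Subsingleton.elim x 0) hx
      · omega
    subst hn1
    refine prob_le_one.trans ?_
    norm_num
  obtain ⟨hL, hN, hnm⟩ := WF.param n m hn hmn
  set X : EuclideanSpace ℝ (Fin n) := WithLp.toLp 2 x with hX
  have hX0 : X ≠ 0 := by
    intro h
    exact hx ((WithLp.toLp_eq_zero 2).1 h)
  have hP := WF.good_prob (V := EuclideanSpace ℝ (Fin n)) (m := m) (‖X‖⁻¹ • X)
    (by rw [norm_smul, norm_inv, norm_norm, inv_mul_cancel₀ (norm_ne_zero_iff.2 hX0)]) hL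
    (by rw [finrank_euclideanSpace_fin]; exact hN)
  refine le_trans ?_ ((WF.mp_toLp.measure_preimage_le _).trans (hP.trans (ENNReal.ofReal_le_ofReal ?_)))
  · refine measure_mono ?_
    intro a ha
    simp only [Set.mem_preimage, Set.mem_ofPred_eq] at ha ⊢
    intro G
    apply ha
    rintro z ⟨lam, h1, h2⟩ h3 hz
    have hs : (1 / (m : ℝ)) * ∑ ℓ, (∑ i, a ℓ i * x i) ^ 2 =
        WF.sig2 (fun l => WithLp.toLp 2 (a l)) X := by
      rw [WF.sig2, one_div]
      congr 1
      exact Finset.sum_congr rfl fun l _ => by rw [WF.sum_eq_inner]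
    have h := WF.scaled X hX0 G (fun k => WithLp.toLp 2 (z k)) lam
      (by rw [← WF.mulVec_eq, h1, WithLp.toLp_smul])
      (by
        intro μ w hw he
        refine h2 μ (WithLp.ofLp w) (fun h => hw ?_) ?_
        · exact (WithLp.ofLp_eq_zero 2).1 h
        · apply WithLp.toLp_injective 2
          rw [WF.mulVec_eq, WithLp.toLp_smul]
          exact he)
      (by rw [← hs, ← h3, WF.l2norm_eq])
      (by
        intro k
        rw [hz k, WithLp.toLp_sub, WF.grad_eq, h3, hs])
    simp only [WF.signDist_eq, WF.l2norm_eq]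
    exact h
  · rw [Real.rpow_neg_one]
    have : (0:ℝ) < n := by
      have : 0 < n := by omega
      exact_mod_cast this
    rw [div_eq_mul_inv]
    gcongr
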